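/- arXiv:1002.1989 — 8 statements merged into one kernel-verified Lean document; each statement's English description precedes it below -/
import Mathlib

section
/- Suppose ℏ is a real constant, A₁,A₂,A₃,A₄,B₀,B₁,B₂,C₁,C₂,D₀ are real constants, R : (0,∞) → ℝ and S : ℝ → ℝ are smooth, V(r,θ) = R(r) + S(θ)/r², and smooth functions G₁, G₂ : (0,∞) × ℝ → ℝ satisfy the four determining equations (E1)–(E4) for all r > 0 and all θ ∈ ℝ. Then either A₁ = A₂ = A₃ = A₄ = B₁ = B₂ = C₁ = C₂ = 0 (with no restriction on R), or there exist real constants a₃, a₄, c₀, c₂ such that R(r) = a₃/r + a₄ r² + c₀ + c₂/r² for all r > 0, with a₃·a₄ = 0, and moreover a₄ ≠ 0 implies C₁ = C₂ = 0. -/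
open Real

/-- The coefficient function `F₁(θ)` of the third order integral. -/
noncomputable def F₁ (A₁ A₂ A₃ A₄ θ : ℝ) : ℝ :=
  A₁ * cos (3 * θ) + A₂ * sin (3 * θ) + A₃ * cos θ + A₄ * sin θ

/-- The coefficient function `F₂(r,θ)` of the third order integral. -/
noncomputable def F₂ (A₁ A₂ A₃ A₄ B₀ B₁ B₂ r θ : ℝ) : ℝ :=
  (1 / r) * (-3 * A₁ * sin (3 * θ) + 3 * A₂ * cos (3 * θ) - A₃ * sin θ + A₄ * cos θ)
    + B₁ * cos (2 * θ) + B₂ * sin (2 * θ) + B₀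

/-- The coefficient function `F₃(r,θ)` of the third order integral. -/
noncomputable def F₃ (A₁ A₂ A₃ A₄ B₁ B₂ C₁ C₂ r θ : ℝ) : ℝ :=
  (1 / r ^ 2) * (-3 * A₁ * cos (3 * θ) - 3 * A₂ * sin (3 * θ) + A₃ * cos θ + A₄ * sin θ)
    + (1 / r) * (-2 * B₁ * sin (2 * θ) + 2 * B₂ * cos (2 * θ))
    + C₁ * cos θ + C₂ * sin θ

/-- The coefficient function `F₄(r,θ)` of the third order integral. -/
noncomputable def F₄ (A₁ A₂ A₃ A₄ B₀ B₁ B₂ C₁ C₂ D₀ r θ : ℝ) : ℝ :=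
  (1 / r ^ 3) * (A₁ * sin (3 * θ) - A₂ * cos (3 * θ) - A₃ * sin θ + A₄ * cos θ)
    + (1 / r ^ 2) * (-B₁ * cos (2 * θ) - B₂ * sin (2 * θ) + B₀)
    + (1 / r) * (-C₁ * sin θ + C₂ * cos θ) + D₀


/-- The ten constants of the third order integral. -/
structure Cst where
  (A1 A2 A3 A4 B0 B1 B2 C1 C2 D0 : ℝ)

noncomputable section

namespace Cst

def f (K : Cst) (θ : ℝ) : ℝ :=
  K.A1 * cos (3 * θ) + K.A2 * sin (3 * θ) + K.A3 * cos θ + K.A4 * sin θ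
def f1 (K : Cst) (θ : ℝ) : ℝ :=
  -3 * K.A1 * sin (3 * θ) + 3 * K.A2 * cos (3 * θ) - K.A3 * sin θ + K.A4 * cos θ
def f2 (K : Cst) (θ : ℝ) : ℝ :=
  -9 * K.A1 * cos (3 * θ) - 9 * K.A2 * sin (3 * θ) - K.A3 * cos θ - K.A4 * sin θ
def k (K : Cst) (θ : ℝ) : ℝ :=
  K.A1 * sin (3 * θ) - K.A2 * cos (3 * θ) - K.A3 * sin θ + K.A4 * cos θ
def b (K : Cst) (θ : ℝ) : ℝ := K.B1 * cos (2 * θ) + K.B2 * sin (2 * θ) + K.B0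
def b1 (K : Cst) (θ : ℝ) : ℝ := -2 * K.B1 * sin (2 * θ) + 2 * K.B2 * cos (2 * θ)
def c (K : Cst) (θ : ℝ) : ℝ := K.C1 * cos θ + K.C2 * sin θ
def c1 (K : Cst) (θ : ℝ) : ℝ := -K.C1 * sin θ + K.C2 * cos θ

end Cst

theorem hasDerivAt_cos_mul (m θ : ℝ) : HasDerivAt (fun x => cos (m * x)) (-m * sin (m * θ)) θ := by
  have := ((hasDerivAt_id' θ).const_mul m).cos
  refine this.congr_deriv ?_
  ring

theorem hasDerivAt_sin_mul (m θ : ℝ) : HasDerivAt (fun x => sin (m * x)) (m * cos (m * θ)) θ := by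
  have := ((hasDerivAt_id' θ).const_mul m).sin
  refine this.congr_deriv ?_
  ring

theorem Cst.hf (K : Cst) (θ : ℝ) : HasDerivAt K.f (K.f1 θ) θ := by
  have := ((((hasDerivAt_cos_mul 3 θ).const_mul K.A1).add
    ((hasDerivAt_sin_mul 3 θ).const_mul K.A2)).add ((hasDerivAt_cos θ).const_mul K.A3)).add
    ((hasDerivAt_sin θ).const_mul K.A4)
  refine this.congr_deriv ?_
  simp only [Cst.f1]; ring

theorem Cst.hf1 (K : Cst) (θ : ℝ) : HasDerivAt K.f1 (K.f2 θ) θ := by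
  have := ((((hasDerivAt_sin_mul 3 θ).const_mul (-3 * K.A1)).add
    ((hasDerivAt_cos_mul 3 θ).const_mul (3 * K.A2))).sub ((hasDerivAt_sin θ).const_mul K.A3)).add
    ((hasDerivAt_cos θ).const_mul K.A4)
  refine this.congr_deriv ?_
  simp only [Cst.f2]; ring

theorem Cst.hf2 (K : Cst) (θ : ℝ) : HasDerivAt K.f2 (6 * K.k θ - 7 * K.f1 θ) θ := by
  have := ((((hasDerivAt_cos_mul 3 θ).const_mul (-9 * K.A1)).sub
    ((hasDerivAt_sin_mul 3 θ).const_mul (9 * K.A2))).sub ((hasDerivAt_cos θ).const_mul K.A3)).sub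
    ((hasDerivAt_sin θ).const_mul K.A4)
  refine this.congr_deriv ?_
  simp only [Cst.k, Cst.f1]; ring

theorem Cst.hb (K : Cst) (θ : ℝ) : HasDerivAt K.b (K.b1 θ) θ := by
  have := (((hasDerivAt_cos_mul 2 θ).const_mul K.B1).add
    ((hasDerivAt_sin_mul 2 θ).const_mul K.B2)).add_const K.B0
  refine this.congr_deriv ?_
  simp only [Cst.b1]; ring

theorem Cst.hb1 (K : Cst) (θ : ℝ) : HasDerivAt K.b1 (-4 * (K.b θ - K.B0)) θ := by
  have := (((hasDerivAt_sin_mul 2 θ).const_mul (-2 * K.B1)).add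
    ((hasDerivAt_cos_mul 2 θ).const_mul (2 * K.B2)))
  refine this.congr_deriv ?_
  simp only [Cst.b]; ring

theorem Cst.hc (K : Cst) (θ : ℝ) : HasDerivAt K.c (K.c1 θ) θ := by
  have := (((hasDerivAt_cos θ).const_mul K.C1).add ((hasDerivAt_sin θ).const_mul K.C2))
  refine this.congr_deriv ?_
  simp only [Cst.c1]; ring

/-- The reduced system: all integrations in `r` done. -/
structure Sys (K : Cst) (H : ℝ) (R Q R1 R2 R3 S S1 S2 S3 g g' g'' g2 p0 : ℝ → ℝ) : Prop where
  hR : ∀ r, 0 < r → HasDerivAt R (R1 r) r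
  hR1 : ∀ r, 0 < r → HasDerivAt R1 (R2 r) r
  hR2 : ∀ r, 0 < r → HasDerivAt R2 (R3 r) r
  hQ : ∀ r, 0 < r → HasDerivAt Q (R r / r ^ 2) r
  hS : ∀ t, HasDerivAt S (S1 t) t
  hS1 : ∀ t, HasDerivAt S1 (S2 t) t
  hS2 : ∀ t, HasDerivAt S2 (S3 t) t
  hg : ∀ t, HasDerivAt g (g' t) t
  hg' : ∀ t, HasDerivAt g' (g'' t) t
  L : ∀ r, 0 < r → ∀ t,
    ((K.f2 t + 3 * K.f t) / 2 + K.b1 t * r + K.c t * r ^ 2) * R1 r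
      - (3 * K.f t + 2 * K.f2 t) * R r / r - 2 * K.b1 t * R r + K.f2 t * Q r
    = p0 t + (g'' t + g t - 2 * K.c t * S2 t - 5 * K.c1 t * S1 t + 2 * K.c t * S t) / r
      + (-(1 / 2) * (K.b t * S3 t + 4 * K.b1 t * S2 t + (24 * K.B0 - 20 * K.b t) * S1 t
          - 8 * K.b1 t * S t)) / r ^ 2
      + (-(1 / 3) * (-7 * K.f2 t * S t - 7 * K.f1 t * S1 t
            + 3 / 2 * (6 * K.k t - 7 * K.f1 t) * S1 t + 2 * K.f2 t * S2 t + 1 / 2 * K.f1 t * S3 t)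
          + (K.f2 t + 3 * K.f t) * S t - 3 * K.k t * S1 t + 3 * K.f t * S t
          - 1 / 2 * K.f1 t * S1 t) / r ^ 3
  N : ∀ r, 0 < r → ∀ t,
    3 * K.f t * R r * R1 r
      + (g t - K.b t * S1 t / r + (3 * K.f t * S t - K.f1 t * S1 t / 2) / r ^ 2) * R1 r
      - 6 * K.f t * S t * R r / r ^ 3
      + S1 t * (2 * K.b t * R r + 2 * K.f1 t * R r / r - K.f1 t * Q r) / r ^ 2
      + (S1 t * g2 t - H * (K.D0 * S3 t)) / r ^ 2
      + (-2 * S t * g t - 2 * K.c t * S1 t ^ 2 + S1 t * g' t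
          - H * (K.c1 t * S3 t - 4 * K.c t * S2 t - 6 * K.c1 t * S1 t + 4 * K.c t * S t)) / r ^ 3
      + (2 * K.b t * S t * S1 t
          - 1 / 2 * S1 t * (-4 * K.b t * S t + 3 * K.b1 t * S1 t + K.b t * S2 t)
          - H * ((2 * K.B0 - K.b t) * S3 t - 4 * K.b1 t * S2 t
              + (12 * K.b t - 8 * (2 * K.B0 - K.b t)) * S1 t + 8 * K.b1 t * S t)) / r ^ 4
      + (-2 * S t * (3 * K.f t * S t - 1 / 2 * K.f1 t * S1 t)
          - 1 / 3 * S1 t * (-7 * K.f1 t * S t + 3 / 2 * K.f2 t * S1 t + 1 / 2 * K.f1 t * S2 t)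
          - H * (K.k t * S3 t - 2 * (K.f2 t + 3 * K.f t) * S2 t + (12 * K.f1 t - 8 * K.k t) * S1 t
              + (4 * (K.f2 t + 3 * K.f t) - 24 * K.f t) * S t)) / r ^ 5
    = H * (K.f t * R3 r + ((K.f2 t + 3 * K.f t) / 2 / r + K.b1 t + K.c t * r) * R2 r
        - ((K.f2 t + 3 * K.f t) / 2 / r ^ 2 + K.b1 t / r - K.c t) * R1 r)

theorem const_of_deriv {φ : ℝ → ℝ} (h : ∀ r, 0 < r → HasDerivAt φ 0 r) :
    ∃ a, ∀ r, 0 < r → φ r = a := by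
  have := isOpen_Ioi.exists_is_const_of_deriv_eq_zero (isPreconnected_Ioi (a := (0:ℝ))) (f := φ)
    (fun x hx => (h x hx).differentiableAt.differentiableWithinAt) (fun x hx => (h x hx).deriv)
  simpa using this

theorem deriv_unique {φ ψ : ℝ → ℝ} {r a b : ℝ} (hr : 0 < r) (h : ∀ x, 0 < x → φ x = ψ x)
    (h1 : HasDerivAt φ a r) (h2 : HasDerivAt ψ b r) : a = b := by
  have : HasDerivAt φ b r := by
    refine h2.congr_of_eventuallyEq ?_
    filter_upwards [isOpen_Ioi.mem_nhds hr] with x hx using h x hx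
  exact h1.unique this

theorem hasDerivAt_inv_pow (n : ℕ) (r : ℝ) (hr : 0 < r) :
    HasDerivAt (fun x : ℝ => 1 / x ^ n) (-(n : ℝ) / r ^ (n + 1)) r := by
  have h := (hasDerivAt_pow n r).inv (pow_ne_zero n hr.ne')
  have e : (fun x : ℝ => 1 / x ^ n) = (fun x => x ^ n)⁻¹ := by ext x; simp
  rw [e]
  refine h.congr_deriv ?_
  rcases n with _ | n
  · simp
  · simp only [Nat.add_sub_cancel]; field_simp; ring

theorem build_sys (K : Cst) (ℏ : ℝ) (R S : ℝ → ℝ) (G₁ G₂ : ℝ → ℝ → ℝ)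
    (hR : ContDiffOn ℝ (⊤ : ℕ∞) R (Set.Ioi 0)) (hS : ContDiff ℝ (⊤ : ℕ∞) S)
    (hG₁ : ContDiffOn ℝ (⊤ : ℕ∞) (Function.uncurry G₁) (Set.Ioi 0 ×ˢ Set.univ))
    (hG₂ : ContDiffOn ℝ (⊤ : ℕ∞) (Function.uncurry G₂) (Set.Ioi 0 ×ˢ Set.univ))
    (hE1 : ∀ r ∈ Set.Ioi (0 : ℝ), ∀ θ : ℝ,
      G₁ r θ * (deriv R r - 2 * S θ / r ^ 3) + G₂ r θ * (deriv S θ / r ^ 2)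
        = ℏ ^ 2 / 4 *
          (F₁ K.A1 K.A2 K.A3 K.A4 θ * (iteratedDeriv 3 R r - 24 * S θ / r ^ 5)
            + F₂ K.A1 K.A2 K.A3 K.A4 K.B0 K.B1 K.B2 r θ * (6 * deriv S θ / r ^ 4)
            + F₃ K.A1 K.A2 K.A3 K.A4 K.B1 K.B2 K.C1 K.C2 r θ * (-2 * iteratedDeriv 2 S θ / r ^ 3)
            + F₄ K.A1 K.A2 K.A3 K.A4 K.B0 K.B1 K.B2 K.C1 K.C2 K.D0 r θ * (iteratedDeriv 3 S θ / r ^ 2)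
            + r * F₃ K.A1 K.A2 K.A3 K.A4 K.B1 K.B2 K.C1 K.C2 r θ * (iteratedDeriv 2 R r + 6 * S θ / r ^ 4)
            + (3 * r * F₄ K.A1 K.A2 K.A3 K.A4 K.B0 K.B1 K.B2 K.C1 K.C2 K.D0 r θ
                - (2 / r) * F₂ K.A1 K.A2 K.A3 K.A4 K.B0 K.B1 K.B2 r θ) * (-2 * deriv S θ / r ^ 3)
            - (2 / r) * F₃ K.A1 K.A2 K.A3 K.A4 K.B1 K.B2 K.C1 K.C2 r θ * (iteratedDeriv 2 S θ / r ^ 2)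
            + (-F₃ K.A1 K.A2 K.A3 K.A4 K.B1 K.B2 K.C1 K.C2 r θ + 2 * K.C1 * cos θ + 2 * K.C2 * sin θ)
                * (deriv R r - 2 * S θ / r ^ 3)
            + (-2 * F₄ K.A1 K.A2 K.A3 K.A4 K.B0 K.B1 K.B2 K.C1 K.C2 K.D0 r θ
                + (2 / r ^ 2) * F₂ K.A1 K.A2 K.A3 K.A4 K.B0 K.B1 K.B2 r θ + 8 * K.D0
                + (-2 * K.C1 * sin θ + 2 * K.C2 * cos θ) / r) * (deriv S θ / r ^ 2)))
    (hE2 : ∀ r ∈ Set.Ioi (0 : ℝ), ∀ θ : ℝ,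
      deriv (fun r' => G₁ r' θ) r
        = 3 * F₁ K.A1 K.A2 K.A3 K.A4 θ * (deriv R r - 2 * S θ / r ^ 3)
          + F₂ K.A1 K.A2 K.A3 K.A4 K.B0 K.B1 K.B2 r θ * (deriv S θ / r ^ 2))
    (hE3 : ∀ r ∈ Set.Ioi (0 : ℝ), ∀ θ : ℝ,
      (1 / r ^ 2) * deriv (fun θ' => G₂ r θ') θ
        = F₃ K.A1 K.A2 K.A3 K.A4 K.B1 K.B2 K.C1 K.C2 r θ * (deriv R r - 2 * S θ / r ^ 3)
          + 3 * F₄ K.A1 K.A2 K.A3 K.A4 K.B0 K.B1 K.B2 K.C1 K.C2 K.D0 r θ * (deriv S θ / r ^ 2)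
          - G₁ r θ / r ^ 3)
    (hE4 : ∀ r ∈ Set.Ioi (0 : ℝ), ∀ θ : ℝ,
      deriv (fun r' => G₂ r' θ) r
        = 2 * (F₂ K.A1 K.A2 K.A3 K.A4 K.B0 K.B1 K.B2 r θ * (deriv R r - 2 * S θ / r ^ 3)
            + F₃ K.A1 K.A2 K.A3 K.A4 K.B1 K.B2 K.C1 K.C2 r θ * (deriv S θ / r ^ 2))
          - (1 / r ^ 2) * deriv (fun θ' => G₁ r θ') θ) :
    ∃ Q R1 R2 R3 S1 S2 S3 g g' g'' g2 p0,
      Sys K (ℏ ^ 2 / 4) R Q R1 R2 R3 S S1 S2 S3 g g' g'' g2 p0 := by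
  -- coefficient functions in reduced form
  have eF1 : ∀ t, F₁ K.A1 K.A2 K.A3 K.A4 t = K.f t := fun t => rfl
  have eF2 : ∀ r t, F₂ K.A1 K.A2 K.A3 K.A4 K.B0 K.B1 K.B2 r t = (1 / r) * K.f1 t + K.b t := by
    intro r t; simp only [F₂, Cst.f1, Cst.b]; ring
  have eF3 : ∀ r t, F₃ K.A1 K.A2 K.A3 K.A4 K.B1 K.B2 K.C1 K.C2 r t
      = (1 / r ^ 2) * ((K.f2 t + 3 * K.f t) / 2) + (1 / r) * K.b1 t + K.c t := by
    intro r t; simp only [F₃, Cst.f2, Cst.f, Cst.b1, Cst.c]; ring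
  have eF4 : ∀ r t, F₄ K.A1 K.A2 K.A3 K.A4 K.B0 K.B1 K.B2 K.C1 K.C2 K.D0 r t
      = (1 / r ^ 3) * K.k t + (1 / r ^ 2) * (2 * K.B0 - K.b t) + (1 / r) * K.c1 t + K.D0 := by
    intro r t; simp only [F₄, Cst.k, Cst.b, Cst.c1]; ring
  have eC : ∀ t, 2 * K.C1 * cos t + 2 * K.C2 * sin t = 2 * K.c t := by
    intro t; simp only [Cst.c]; ring
  have eC1 : ∀ t, -2 * K.C1 * sin t + 2 * K.C2 * cos t = 2 * K.c1 t := by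
    intro t; simp only [Cst.c1]; ring
  -- derivatives of R
  have hR1c : ContDiffOn ℝ (⊤ : ℕ∞) (deriv R) (Set.Ioi 0) := hR.deriv_of_isOpen isOpen_Ioi (by simp)
  have hR2c : ContDiffOn ℝ (⊤ : ℕ∞) (deriv (deriv R)) (Set.Ioi 0) :=
    hR1c.deriv_of_isOpen isOpen_Ioi (by simp)
  have toD : ∀ φ : ℝ → ℝ, ContDiffOn ℝ (⊤ : ℕ∞) φ (Set.Ioi 0) →
      ∀ r, 0 < r → HasDerivAt φ (deriv φ r) r := by
    intro φ hφ r hr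
    exact ((hφ.differentiableOn (by simp)).differentiableAt (isOpen_Ioi.mem_nhds hr)).hasDerivAt
  have hS1c : ContDiff ℝ (⊤ : ℕ∞) (deriv S) := (contDiff_infty_iff_deriv.1 hS).2
  have hS2c : ContDiff ℝ (⊤ : ℕ∞) (deriv (deriv S)) := (contDiff_infty_iff_deriv.1 hS1c).2
  have toD' : ∀ φ : ℝ → ℝ, ContDiff ℝ (⊤ : ℕ∞) φ → ∀ r, HasDerivAt φ (deriv φ r) r := by
    intro φ hφ r
    exact (hφ.differentiable (by simp) r).hasDerivAt
  have iR2 : iteratedDeriv 2 R = deriv (deriv R) := by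
    rw [iteratedDeriv_succ, iteratedDeriv_one]
  have iR3 : iteratedDeriv 3 R = deriv (deriv (deriv R)) := by
    rw [iteratedDeriv_succ, iR2]
  have iS2 : iteratedDeriv 2 S = deriv (deriv S) := by
    rw [iteratedDeriv_succ, iteratedDeriv_one]
  have iS3 : iteratedDeriv 3 S = deriv (deriv (deriv S)) := by
    rw [iteratedDeriv_succ, iS2]
  -- slices
  have sl : ∀ G : ℝ → ℝ → ℝ, ContDiffOn ℝ (⊤ : ℕ∞) (Function.uncurry G) (Set.Ioi 0 ×ˢ Set.univ) →
      (∀ t r, 0 < r → HasDerivAt (fun r' => G r' t) (deriv (fun r' => G r' t) r) r) ∧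
      (∀ r, 0 < r → ContDiff ℝ (⊤ : ℕ∞) (fun t => G r t)) := by
    intro G hG
    constructor
    · intro t
      apply toD
      have : ContDiffOn ℝ (⊤ : ℕ∞) (fun r : ℝ => (r, t)) (Set.Ioi 0) := by fun_prop
      exact hG.comp this (fun x hx => ⟨hx, trivial⟩)
    · intro r hr
      rw [← contDiffOn_univ]
      have : ContDiffOn ℝ (⊤ : ℕ∞) (fun t : ℝ => (r, t)) Set.univ := by fun_prop
      exact hG.comp this (fun x hx => ⟨hr, trivial⟩)
  obtain ⟨G1r, G1t⟩ := sl G₁ hG₁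
  obtain ⟨G2r, G2t⟩ := sl G₂ hG₂
  -- antiderivative
  obtain ⟨Q, hQ⟩ : ∃ Q : ℝ → ℝ, ∀ r, 0 < r → HasDerivAt Q (R r / r ^ 2) r := by
    refine ⟨fun r => ∫ x in (1:ℝ)..r, R x / x ^ 2, fun r hr => ?_⟩
    have hc : ContinuousOn (fun x => R x / x ^ 2) (Set.Ioi 0) :=
      hR.continuousOn.div (by fun_prop) (fun x hx => pow_ne_zero 2 (ne_of_gt hx))
    refine intervalIntegral.integral_hasDerivAt_right ?_ ?_ (hc.continuousAt (isOpen_Ioi.mem_nhds hr))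
    · refine (hc.mono ?_).intervalIntegrable
      intro x hx
      exact lt_of_lt_of_le (lt_min one_pos hr) hx.1
    · exact hc.stronglyMeasurableAtFilter isOpen_Ioi r hr
  set S1 := deriv S with hS1
  set S2 := deriv S1 with hS2
  set S3 := deriv S2 with hS3
  set R1 := deriv R with hR1
  set R2 := deriv R1 with hR2
  set R3 := deriv R2 with hR3
  have dR := toD R hR
  have dR1 := toD R1 hR1c
  have dR2 := toD R2 hR2c
  have dS := toD' S hS
  have dS1 := toD' S1 hS1c
  have dS2 := toD' S2 hS2c
  rw [← hR1] at dR
  rw [← hR2] at dR1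
  rw [← hR3] at dR2
  rw [← hS1] at dS
  rw [← hS2] at dS1
  rw [← hS3] at dS2
  -- integrate E2
  have key1 : ∀ t, ∃ a, ∀ r, 0 < r → G₁ r t - (3 * K.f t * R r
      + (3 * K.f t * S t - K.f1 t * S1 t / 2) * (1 / r ^ 2) - K.b t * S1 t * (1 / r ^ 1)) = a := by
    intro t
    apply const_of_deriv
    intro r hr
    have h := (G1r t r hr).sub ((((dR r hr).const_mul (3 * K.f t)).add
      ((hasDerivAt_inv_pow 2 r hr).const_mul (3 * K.f t * S t - K.f1 t * S1 t / 2))).sub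
      ((hasDerivAt_inv_pow 1 r hr).const_mul (K.b t * S1 t)))
    refine h.congr_deriv ?_
    rw [hE2 r hr t, eF1, eF2]
    field_simp
    push_cast
    ring
  choose g hg using key1
  have G1eq : ∀ r, 0 < r → ∀ t, G₁ r t = 3 * K.f t * R r + g t
      + (3 * K.f t * S t - K.f1 t * S1 t / 2) / r ^ 2 - K.b t * S1 t / r := by
    intro r hr t
    have := hg t r hr
    simp only [pow_one] at this
    rw [← this]; ring
  have cf : ContDiff ℝ (⊤ : ℕ∞) K.f := by unfold Cst.f; fun_prop
  have cf1 : ContDiff ℝ (⊤ : ℕ∞) K.f1 := by unfold Cst.f1; fun_prop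
  have cb : ContDiff ℝ (⊤ : ℕ∞) K.b := by unfold Cst.b; fun_prop
  have cg : ContDiff ℝ (⊤ : ℕ∞) g := by
    have e : g = fun t => G₁ 1 t - (3 * K.f t * R 1 + (3 * K.f t * S t - K.f1 t * S1 t / 2)
        - K.b t * S1 t) := by
      ext t; rw [G1eq 1 one_pos t]; ring
    rw [e]
    have := G1t 1 one_pos
    fun_prop
  have cg1 : ContDiff ℝ (⊤ : ℕ∞) (deriv g) := (contDiff_infty_iff_deriv.1 cg).2
  have dg := toD' g cg
  have dg1 := toD' _ cg1
  have dG1 : ∀ r, 0 < r → ∀ t, deriv (fun t' => G₁ r t') t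
      = 3 * K.f1 t * R r + deriv g t
        + (3 * K.f1 t * S t + 3 * K.f t * S1 t - (K.f2 t * S1 t + K.f1 t * S2 t) / 2) / r ^ 2
        - (K.b1 t * S1 t + K.b t * S2 t) / r := by
    intro r hr t
    have e : (fun t' => G₁ r t') = fun t => 3 * K.f t * R r + g t
      + (3 * K.f t * S t - K.f1 t * S1 t / 2) / r ^ 2 - K.b t * S1 t / r := by
      ext t; exact G1eq r hr t
    rw [e]
    have h := ((((((K.hf t).const_mul 3).mul_const (R r)).add (dg t)).add
      (((((K.hf t).const_mul 3).mul (dS t)).sub (((K.hf1 t).mul (dS1 t)).div_const 2)).div_const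
        (r ^ 2))).sub (((K.hb t).mul (dS1 t)).div_const r))
    refine h.deriv.trans ?_
    ring
  have key2 : ∀ t, ∃ a, ∀ r, 0 < r → G₂ r t - (2 * K.b t * R r + 2 * K.f1 t * (R r * (1 / r ^ 1))
      - K.f1 t * Q r - (2 * K.c t * S1 t - deriv g t) * (1 / r ^ 1)
      - 1 / 2 * (-4 * K.b t * S t + 3 * K.b1 t * S1 t + K.b t * S2 t) * (1 / r ^ 2)
      - 1 / 3 * (-7 * K.f1 t * S t + 3 / 2 * K.f2 t * S1 t + 1 / 2 * K.f1 t * S2 t)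
        * (1 / r ^ 3)) = a := by
    intro t
    apply const_of_deriv
    intro r hr
    have h := (G2r t r hr).sub (((((((dR r hr).const_mul (2 * K.b t)).add
      (((dR r hr).mul (hasDerivAt_inv_pow 1 r hr)).const_mul (2 * K.f1 t))).sub
      ((hQ r hr).const_mul (K.f1 t))).sub
      ((hasDerivAt_inv_pow 1 r hr).const_mul (2 * K.c t * S1 t - deriv g t))).sub
      ((hasDerivAt_inv_pow 2 r hr).const_mul
        (1 / 2 * (-4 * K.b t * S t + 3 * K.b1 t * S1 t + K.b t * S2 t)))).sub
      ((hasDerivAt_inv_pow 3 r hr).const_mul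
        (1 / 3 * (-7 * K.f1 t * S t + 3 / 2 * K.f2 t * S1 t + 1 / 2 * K.f1 t * S2 t))))
    refine h.congr_deriv ?_
    rw [hE4 r hr t, eF2, eF3, dG1 r hr t]
    field_simp
    push_cast
    ring
  choose g2 hg2 using key2
  have G2eq : ∀ r, 0 < r → ∀ t, G₂ r t = 2 * K.b t * R r + 2 * K.f1 t * R r / r
      - K.f1 t * Q r + g2 t - (2 * K.c t * S1 t - deriv g t) / r
      - 1 / 2 * (-4 * K.b t * S t + 3 * K.b1 t * S1 t + K.b t * S2 t) / r ^ 2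
      - 1 / 3 * (-7 * K.f1 t * S t + 3 / 2 * K.f2 t * S1 t + 1 / 2 * K.f1 t * S2 t) / r ^ 3 := by
    intro r hr t
    have := hg2 t r hr
    simp only [pow_one] at this
    rw [← this]; ring
  have dQ2 : ∀ t, HasDerivAt g2 (deriv g2 t) t := by
    intro t
    have e : g2 = fun t => G₂ 1 t - (2 * K.b t * R 1 + 2 * K.f1 t * R 1
      - K.f1 t * Q 1 - (2 * K.c t * S1 t - deriv g t)
      - 1 / 2 * (-4 * K.b t * S t + 3 * K.b1 t * S1 t + K.b t * S2 t)
      - 1 / 3 * (-7 * K.f1 t * S t + 3 / 2 * K.f2 t * S1 t + 1 / 2 * K.f1 t * S2 t)) := by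
      ext t; rw [G2eq 1 one_pos t]; ring
    have cG := G2t 1 one_pos
    have cf2 : ContDiff ℝ (⊤ : ℕ∞) K.f2 := by unfold Cst.f2; fun_prop
    have cb1 : ContDiff ℝ (⊤ : ℕ∞) K.b1 := by unfold Cst.b1; fun_prop
    have cc : ContDiff ℝ (⊤ : ℕ∞) K.c := by unfold Cst.c; fun_prop
    refine toD' g2 ?_ t
    rw [e]
    fun_prop
  refine ⟨Q, R1, R2, R3, S1, S2, S3, g, deriv g, deriv (deriv g), g2,
    fun t => deriv g2 t - 3 * K.D0 * S1 t, dR, dR1, dR2, hQ, dS, dS1, dS2, dg, dg1, ?_, ?_⟩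
  · intro r hr t
    have h3 := hE3 r hr t
    have e : (fun t' => G₂ r t') = fun t => 2 * K.b t * R r + 2 * K.f1 t * R r / r
      - K.f1 t * Q r + g2 t - (2 * K.c t * S1 t - deriv g t) / r
      - 1 / 2 * (-4 * K.b t * S t + 3 * K.b1 t * S1 t + K.b t * S2 t) / r ^ 2
      - 1 / 3 * (-7 * K.f1 t * S t + 3 / 2 * K.f2 t * S1 t + 1 / 2 * K.f1 t * S2 t) / r ^ 3 := by
      ext t; exact G2eq r hr t
    have h := ((((((((K.hb t).const_mul 2).mul_const (R r)).add
      ((((K.hf1 t).const_mul 2).mul_const (R r)).div_const r)).sub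
      ((K.hf1 t).mul_const (Q r))).add (dQ2 t)).sub
      (((((K.hc t).const_mul 2).mul (dS1 t)).sub (dg1 t)).div_const r)).sub
      (((((((K.hb t).const_mul (-4)).mul (dS t)).add (((K.hb1 t).const_mul 3).mul (dS1 t))).add
        ((K.hb t).mul (dS2 t))).const_mul (1 / 2)).div_const (r ^ 2))).sub
      (((((((K.hf1 t).const_mul (-7)).mul (dS t)).add
        (((K.hf2 t).const_mul (3 / 2)).mul (dS1 t))).add
        (((K.hf1 t).const_mul (1 / 2)).mul (dS2 t))).const_mul (1 / 3)).div_const (r ^ 3))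
    rw [e] at h3
    have h' := h.deriv
    have h3' := (congrArg (fun z => 1 / r ^ 2 * z) h').symm.trans h3
    rw [eF3, eF4, G1eq r hr t] at h3'
    have h4 := congrArg (fun z => z * r ^ 2) h3'
    rw [← sub_eq_zero] at h4 ⊢
    rw [← neg_eq_zero, ← h4]
    field_simp
    ring
  · intro r hr t
    have h1 := hE1 r hr t
    have e5 : -((1 / r ^ 2) * ((K.f2 t + 3 * K.f t) / 2) + (1 / r) * K.b1 t + K.c t)
        + 2 * K.C1 * cos t + 2 * K.C2 * sin t
        = -((1 / r ^ 2) * ((K.f2 t + 3 * K.f t) / 2) + (1 / r) * K.b1 t + K.c t) + 2 * K.c t := by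
      rw [← eC t]; ring
    rw [iR2, iR3, iS2, iS3, eF1, eF2, eF3, eF4, eC1, e5, G1eq r hr t, G2eq r hr t] at h1
    rw [← sub_eq_zero] at h1 ⊢
    rw [← h1]
    field_simp
    ring

theorem polyz (l : List ℝ) :
    (∀ r, 0 < r → l.foldr (fun c acc => c + r * acc) 0 = 0) → ∀ c ∈ l, c = 0 := by
  induction l with
  | nil => intro _ c hc; simp at hc
  | cons a l ih =>
    intro h
    have hcont : Continuous (fun r : ℝ => (a :: l).foldr (fun c acc => c + r * acc) 0) := by
      have : ∀ m : List ℝ, Continuous (fun r : ℝ => m.foldr (fun c acc => c + r * acc) 0) := by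
        intro m
        induction m with
        | nil => simpa using continuous_const
        | cons b m ihm => simp only [List.foldr_cons]; fun_prop
      exact this _
    have ha : a = 0 := by
      have hcl : IsClosed {r : ℝ | (a :: l).foldr (fun c acc => c + r * acc) 0 = 0} :=
        isClosed_eq hcont continuous_const
      have hsub : closure (Set.Ioi (0:ℝ)) ⊆ {r : ℝ | (a :: l).foldr (fun c acc => c + r * acc) 0 = 0} :=
        hcl.closure_subset_iff.2 (fun r hr => h r hr)
      have : (0:ℝ) ∈ closure (Set.Ioi (0:ℝ)) := by rw [closure_Ioi]; simp
      have := hsub this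
      simpa using this
    subst ha
    intro c hc
    rcases List.mem_cons.1 hc with rfl | hc
    · rfl
    · refine ih (fun r hr => ?_) c hc
      have := h r hr
      simp only [List.foldr_cons, zero_add] at this
      exact (mul_eq_zero.1 this).resolve_left hr.ne'

theorem poly_at_I (P : Polynomial ℝ) (h : ∀ t, 0 < t → t < 1 → P.eval t = 0) : P = 0 := by
  apply Polynomial.eq_zero_of_infinite_isRoot
  exact (Set.Ioo_infinite (zero_lt_one (α := ℝ))).mono (fun t ht => h t ht.1 ht.2)

open Polynomial in
theorem alg_lemma (l k4 x1 x2 x3 x4 x5 x6 m2 m3 m4 m5 w : ℝ) (hl : 0 < l)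
    (h : ∀ r s, 0 < r → 0 < s → s ^ 2 = 1 + l ^ 2 * r ^ 2 →
      k4 * r / s ^ 4 + x1 * r / s ^ 3 + x2 / s ^ 3 + x3 / (r * s ^ 3) + x4 / (r * s)
        + x5 / (r ^ 2 * s) + x6 / (r ^ 3 * s) + m2 / r ^ 2 + m3 / r ^ 3 + m4 / r ^ 4 + m5 / r ^ 5
        + w * (9 * l ^ 4 * r - 6 * l ^ 6 * r ^ 3) / s ^ 7 = 0) : k4 = 0 := by
  have h1 : ∀ t, 0 < t → t < 1 →
      (1 + t ^ 2) ^ 3 * (k4 * (2 * t) ^ 6 * (1 - t ^ 2) ^ 3 + (1 + t ^ 2) *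
        (x1 * (2 * t) ^ 6 * (1 - t ^ 2) ^ 2
        + l * x2 * (2 * t) ^ 5 * (1 - t ^ 2) ^ 3 + l ^ 2 * x3 * (2 * t) ^ 4 * (1 - t ^ 2) ^ 4
        + l ^ 2 * x4 * (2 * t) ^ 4 * (1 - t ^ 2) ^ 2 * (1 + t ^ 2) ^ 2
        + l ^ 3 * x5 * (2 * t) ^ 3 * (1 - t ^ 2) ^ 3 * (1 + t ^ 2) ^ 2
        + l ^ 4 * x6 * (2 * t) ^ 2 * (1 - t ^ 2) ^ 4 * (1 + t ^ 2) ^ 2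
        + (l ^ 3 * m2 * (1 - t ^ 2) ^ 2 * (2 * t) ^ 3 + l ^ 4 * m3 * (1 - t ^ 2) ^ 3 * (2 * t) ^ 2
          + l ^ 5 * m4 * (1 - t ^ 2) ^ 4 * (2 * t) + l ^ 6 * m5 * (1 - t ^ 2) ^ 5)
          * (1 + t ^ 2) ^ 3))
        + w * l ^ 4 * (9 * (2 * t) ^ 6 * (1 - t ^ 2) ^ 6 - 6 * (2 * t) ^ 8 * (1 - t ^ 2) ^ 4) = 0 := by
    intro t ht0 ht1
    have hv : 0 < 1 - t ^ 2 := by nlinarith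
    have hu : 0 < 1 + t ^ 2 := by positivity
    have := h (2 * t / (l * (1 - t ^ 2))) ((1 + t ^ 2) / (1 - t ^ 2)) (by positivity) (by positivity)
      (by field_simp; ring)
    generalize hvv : 1 - t ^ 2 = v at *
    generalize huu : 1 + t ^ 2 = u at *
    have h2 : (l * u ^ 7 * (2 * t) ^ 5) * 0 = 0 := by ring
    rw [← this] at h2
    rw [← this, ← h2]
    field_simp
    ring
  have hw : w = 0 := by
    have := poly_at_I ((1 + X ^ 2) ^ 3 * (C k4 * (2 * X) ^ 6 * (1 - X ^ 2) ^ 3 + (1 + X ^ 2) *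
        (C x1 * (2 * X) ^ 6 * (1 - X ^ 2) ^ 2
        + C l * C x2 * (2 * X) ^ 5 * (1 - X ^ 2) ^ 3 + C l ^ 2 * C x3 * (2 * X) ^ 4 * (1 - X ^ 2) ^ 4
        + C l ^ 2 * C x4 * (2 * X) ^ 4 * (1 - X ^ 2) ^ 2 * (1 + X ^ 2) ^ 2
        + C l ^ 3 * C x5 * (2 * X) ^ 3 * (1 - X ^ 2) ^ 3 * (1 + X ^ 2) ^ 2
        + C l ^ 4 * C x6 * (2 * X) ^ 2 * (1 - X ^ 2) ^ 4 * (1 + X ^ 2) ^ 2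
        + (C l ^ 3 * C m2 * (1 - X ^ 2) ^ 2 * (2 * X) ^ 3
          + C l ^ 4 * C m3 * (1 - X ^ 2) ^ 3 * (2 * X) ^ 2
          + C l ^ 5 * C m4 * (1 - X ^ 2) ^ 4 * (2 * X) + C l ^ 6 * C m5 * (1 - X ^ 2) ^ 5)
          * (1 + X ^ 2) ^ 3))
        + C w * C l ^ 4 * (9 * (2 * X) ^ 6 * (1 - X ^ 2) ^ 6 - 6 * (2 * X) ^ 8 * (1 - X ^ 2) ^ 4)) (by
      intro t ht0 ht1
      rw [← h1 t ht0 ht1]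
      simp)
    have := congrArg (Polynomial.aeval Complex.I) this
    have e : (1:ℂ) + Complex.I ^ 2 = 0 := by simp
    have e2 : (1:ℂ) - Complex.I ^ 2 = 2 := by simp; norm_num
    have e3 : (Complex.I) ^ 6 = -1 := by
      rw [show (6:ℕ) = 2 * 3 by norm_num, pow_mul]; simp; norm_num
    have e4 : (Complex.I) ^ 8 = 1 := by
      rw [show (8:ℕ) = 2 * 4 by norm_num, pow_mul]; simp; norm_num
    simp only [map_add, map_mul, map_sub, map_pow, aeval_X, map_one, map_zero, map_ofNat, aeval_C,
      e, e2, mul_pow, e3, e4] at this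
    norm_num at this
    rcases this with h | h
    · exact h
    · exact absurd h hl.ne'
  subst hw
  have := poly_at_I ((C k4 * (2 * X) ^ 6 * (1 - X ^ 2) ^ 3 + (1 + X ^ 2) *
        (C x1 * (2 * X) ^ 6 * (1 - X ^ 2) ^ 2
        + C l * C x2 * (2 * X) ^ 5 * (1 - X ^ 2) ^ 3 + C l ^ 2 * C x3 * (2 * X) ^ 4 * (1 - X ^ 2) ^ 4
        + C l ^ 2 * C x4 * (2 * X) ^ 4 * (1 - X ^ 2) ^ 2 * (1 + X ^ 2) ^ 2
        + C l ^ 3 * C x5 * (2 * X) ^ 3 * (1 - X ^ 2) ^ 3 * (1 + X ^ 2) ^ 2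
        + C l ^ 4 * C x6 * (2 * X) ^ 2 * (1 - X ^ 2) ^ 4 * (1 + X ^ 2) ^ 2
        + (C l ^ 3 * C m2 * (1 - X ^ 2) ^ 2 * (2 * X) ^ 3
          + C l ^ 4 * C m3 * (1 - X ^ 2) ^ 3 * (2 * X) ^ 2
          + C l ^ 5 * C m4 * (1 - X ^ 2) ^ 4 * (2 * X) + C l ^ 6 * C m5 * (1 - X ^ 2) ^ 5)
          * (1 + X ^ 2) ^ 3))) (by
      intro t ht0 ht1
      have h2 := h1 t ht0 ht1
      rw [zero_mul, zero_mul, add_zero] at h2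
      have h3 := (mul_eq_zero.1 h2).resolve_left (by positivity)
      rw [← h3]
      simp)
  have := congrArg (Polynomial.aeval Complex.I) this
  have e : (1:ℂ) + Complex.I ^ 2 = 0 := by simp
  have e2 : (1:ℂ) - Complex.I ^ 2 = 2 := by simp; norm_num
  have e3 : (Complex.I) ^ 6 = -1 := by
    rw [show (6:ℕ) = 2 * 3 by norm_num, pow_mul]; simp; norm_num
  simp only [map_add, map_mul, map_sub, map_pow, aeval_X, map_one, map_zero, map_ofNat, aeval_C,
    e, e2, mul_pow, e3] at this
  norm_num at this
  exact this

/-- Lie in the span of `1, 1/r, 1/r², 1/r³`. -/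
def InP (φ : ℝ → ℝ) : Prop :=
  ∃ q0 q1 q2 q3 : ℝ, ∀ r, 0 < r → φ r = q0 + q1 / r + q2 / r ^ 2 + q3 / r ^ 3

theorem InP.lin {φ ψ χ : ℝ → ℝ} (a b : ℝ) (h1 : InP φ) (h2 : InP ψ)
    (h : ∀ r, 0 < r → χ r = a * φ r + b * ψ r) : InP χ := by
  obtain ⟨q0, q1, q2, q3, hq⟩ := h1
  obtain ⟨s0, s1, s2, s3, hs⟩ := h2
  refine ⟨a * q0 + b * s0, a * q1 + b * s1, a * q2 + b * s2, a * q3 + b * s3, fun r hr => ?_⟩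
  rw [h r hr, hq r hr, hs r hr]; ring

section
variable {K : Cst} {H : ℝ} {R Q R1 R2 R3 S S1 S2 S3 g g' g'' g2 p0 : ℝ → ℝ}

theorem Sys.sep (h : Sys K H R Q R1 R2 R3 S S1 S2 S3 g g' g'' g2 p0) :
    (InP fun r => K.A1 * (-9 * Q r + 15 * R r / r - 3 * R1 r)) ∧
    (InP fun r => K.A2 * (-9 * Q r + 15 * R r / r - 3 * R1 r)) ∧
    (InP fun r => K.A3 * (R1 r - R r / r - Q r) + K.C1 * (r ^ 2 * R1 r)) ∧
    (InP fun r => K.A4 * (R1 r - R r / r - Q r) + K.C2 * (r ^ 2 * R1 r)) ∧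
    (InP fun r => K.B1 * (r * R1 r - 2 * R r)) ∧
    (InP fun r => K.B2 * (r * R1 r - 2 * R r)) := by
  have M : ∀ t, InP fun r =>
      (K.A1 * cos (3 * t) + K.A2 * sin (3 * t)) * (-9 * Q r + 15 * R r / r - 3 * R1 r)
      + (cos t * (K.A3 * (R1 r - R r / r - Q r) + K.C1 * (r ^ 2 * R1 r))
      + sin t * (K.A4 * (R1 r - R r / r - Q r) + K.C2 * (r ^ 2 * R1 r)))
      + (-2 * K.B1 * sin (2 * t) + 2 * K.B2 * cos (2 * t)) * (r * R1 r - 2 * R r) := by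
    intro t
    refine ⟨_, _, _, _, fun r hr => Eq.trans ?_ (h.L r hr t)⟩
    simp only [Cst.f, Cst.f2, Cst.b1, Cst.c]
    ring
  have c3 : ∀ t, cos (3 * (t + π)) = -cos (3 * t) := by
    intro t
    rw [show 3 * (t + π) = 3 * t + π + 2 * π by ring, cos_add_two_pi, cos_add_pi]
  have s3 : ∀ t, sin (3 * (t + π)) = -sin (3 * t) := by
    intro t
    rw [show 3 * (t + π) = 3 * t + π + 2 * π by ring, sin_add_two_pi, sin_add_pi]
  have c2 : ∀ t, cos (2 * (t + π)) = cos (2 * t) := by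
    intro t
    rw [show 2 * (t + π) = 2 * t + 2 * π by ring, cos_add_two_pi]
  have s2 : ∀ t, sin (2 * (t + π)) = sin (2 * t) := by
    intro t
    rw [show 2 * (t + π) = 2 * t + 2 * π by ring, sin_add_two_pi]
  have Ev : ∀ t, InP fun r =>
      (-2 * K.B1 * sin (2 * t) + 2 * K.B2 * cos (2 * t)) * (r * R1 r - 2 * R r) := by
    intro t
    refine (M t).lin (1 / 2) (1 / 2) (M (t + π)) (fun r _ => ?_)
    rw [c3, s3, c2, s2, cos_add_pi, sin_add_pi]; ring
  have Od : ∀ t, InP fun r =>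
      (K.A1 * cos (3 * t) + K.A2 * sin (3 * t)) * (-9 * Q r + 15 * R r / r - 3 * R1 r)
      + (cos t * (K.A3 * (R1 r - R r / r - Q r) + K.C1 * (r ^ 2 * R1 r))
      + sin t * (K.A4 * (R1 r - R r / r - Q r) + K.C2 * (r ^ 2 * R1 r))) := by
    intro t
    refine (M t).lin 1 (-1) (Ev t) (fun r _ => ?_)
    ring
  have o0 := Od 0
  have o2 := Od (π / 2)
  have op := Od (π / 3)
  have om := Od (-(π / 3))
  have e1 : cos (3 * (π / 2)) = 0 := by
    rw [show 3 * (π / 2) = π / 2 + π by ring, cos_add_pi, cos_pi_div_two, neg_zero]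
  have e2 : sin (3 * (π / 2)) = -1 := by
    rw [show 3 * (π / 2) = π / 2 + π by ring, sin_add_pi, sin_pi_div_two]
  have e3 : 3 * (π / 3) = π := by ring
  have e4 : 3 * -(π / 3) = -π := by ring
  rw [e4, cos_neg, sin_neg, cos_neg, sin_neg, cos_pi, sin_pi, cos_pi_div_three, sin_pi_div_three] at om
  rw [e3, cos_pi, sin_pi, cos_pi_div_three, sin_pi_div_three] at op
  rw [e1, e2, cos_pi_div_two, sin_pi_div_two] at o2
  rw [mul_zero, cos_zero, sin_zero] at o0
  have pm := op.lin (χ := fun r => -2 * K.A1 * (-9 * Q r + 15 * R r / r - 3 * R1 r)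
    + (K.A3 * (R1 r - R r / r - Q r) + K.C1 * (r ^ 2 * R1 r))) 1 1 om (fun r _ => by ring)
  have hA1 : InP fun r => K.A1 * (-9 * Q r + 15 * R r / r - 3 * R1 r) :=
    o0.lin (1 / 3) (-1 / 3) pm (fun r _ => by ring)
  have hA3 : InP fun r => K.A3 * (R1 r - R r / r - Q r) + K.C1 * (r ^ 2 * R1 r) :=
    o0.lin 1 (-1) hA1 (fun r _ => by ring)
  have h3 : (√3 : ℝ) ≠ 0 := by positivity
  have hA4 : InP fun r => K.A4 * (R1 r - R r / r - Q r) + K.C2 * (r ^ 2 * R1 r) :=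
    op.lin (1 / √3) (-1 / √3) om (fun r _ => by field_simp; ring)
  refine ⟨hA1, hA4.lin 1 (-1) o2 (fun r _ => by ring), hA3, hA4, ?_, ?_⟩
  · have := Ev (π / 4)
    rw [show 2 * (π / 4) = π / 2 by ring, cos_pi_div_two, sin_pi_div_two] at this
    exact this.lin (-1 / 2) 0 this (fun r _ => by ring)
  · have := Ev 0
    rw [mul_zero, cos_zero, sin_zero] at this
    exact this.lin (1 / 2) 0 this (fun r _ => by ring)

theorem InP.of_mul {a : ℝ} {φ : ℝ → ℝ} (ha : a ≠ 0) (h : InP fun r => a * φ r) : InP φ :=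
  h.lin (1 / a) 0 h (fun r _ => by field_simp; ring)

theorem Sys.solve2 (h : Sys K H R Q R1 R2 R3 S S1 S2 S3 g g' g'' g2 p0)
    (hp : InP fun r => r * R1 r - 2 * R r) :
    ∃ a c0 a1 a2 a3, ∀ r, 0 < r → R r = a * r ^ 2 + c0 + a1 / r + a2 / r ^ 2 + a3 / r ^ 3 := by
  obtain ⟨q0, q1, q2, q3, hq⟩ := hp
  obtain ⟨a, ha⟩ := const_of_deriv (φ := fun r => R r * (1 / r ^ 2) + q0 / 2 * (1 / r ^ 2)
      + q1 / 3 * (1 / r ^ 3) + q2 / 4 * (1 / r ^ 4) + q3 / 5 * (1 / r ^ 5)) (by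
    intro r hr
    have hd := ((((((h.hR r hr).mul (hasDerivAt_inv_pow 2 r hr))).add
      ((hasDerivAt_inv_pow 2 r hr).const_mul (q0 / 2))).add
      ((hasDerivAt_inv_pow 3 r hr).const_mul (q1 / 3))).add
      ((hasDerivAt_inv_pow 4 r hr).const_mul (q2 / 4))).add
      ((hasDerivAt_inv_pow 5 r hr).const_mul (q3 / 5))
    refine hd.congr_deriv ?_
    have e : R1 r = (2 * R r + (q0 + q1 / r + q2 / r ^ 2 + q3 / r ^ 3)) / r := by
      have := hq r hr
      simp only at this
      rw [← this]; field_simp; ring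
    rw [e]; push_cast; field_simp; ring)
  refine ⟨a, -q0 / 2, -q1 / 3, -q2 / 4, -q3 / 5, fun r hr => ?_⟩
  rw [← ha r hr]; field_simp; ring

theorem Sys.solveC (h : Sys K H R Q R1 R2 R3 S S1 S2 S3 g g' g'' g2 p0)
    (hp : InP fun r => r ^ 2 * R1 r) :
    ∃ c0 a1 a2 a3 a4, ∀ r, 0 < r → R r = c0 + a1 / r + a2 / r ^ 2 + a3 / r ^ 3 + a4 / r ^ 4 := by
  obtain ⟨q0, q1, q2, q3, hq⟩ := hp
  obtain ⟨a, ha⟩ := const_of_deriv (φ := fun r => R r + q0 * (1 / r ^ 1)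
      + q1 / 2 * (1 / r ^ 2) + q2 / 3 * (1 / r ^ 3) + q3 / 4 * (1 / r ^ 4)) (by
    intro r hr
    have hd := (((((h.hR r hr)).add
      ((hasDerivAt_inv_pow 1 r hr).const_mul q0)).add
      ((hasDerivAt_inv_pow 2 r hr).const_mul (q1 / 2))).add
      ((hasDerivAt_inv_pow 3 r hr).const_mul (q2 / 3))).add
      ((hasDerivAt_inv_pow 4 r hr).const_mul (q3 / 4))
    refine hd.congr_deriv ?_
    have e : R1 r = (q0 + q1 / r + q2 / r ^ 2 + q3 / r ^ 3) / r ^ 2 := by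
      have := hq r hr
      simp only at this
      rw [← this]; field_simp
    rw [e]; push_cast; field_simp; ring)
  refine ⟨a, -q0, -q1 / 2, -q2 / 3, -q3 / 4, fun r hr => ?_⟩
  rw [← ha r hr]; field_simp; ring

theorem Sys.solve3 (h : Sys K H R Q R1 R2 R3 S S1 S2 S3 g g' g'' g2 p0)
    (hp : InP fun r => -9 * Q r + 15 * R r / r - 3 * R1 r) :
    ∃ a d c0 a1 a2, ∀ r, 0 < r → R r = a * r ^ 2 + d * r ^ 4 + c0 + a1 / r + a2 / r ^ 2 := by
  obtain ⟨q0, q1, q2, q3, hq⟩ := hp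
  have e : ∀ r, 0 < r → R1 r
      = (-9 * Q r + 15 * R r / r - (q0 + q1 / r + q2 / r ^ 2 + q3 / r ^ 3)) / 3 := by
    intro r hr
    have := hq r hr
    simp only at this
    rw [← this]; ring
  obtain ⟨a, ha⟩ := const_of_deriv (φ := fun r => R r * (1 / r ^ 4) - Q r * (1 / r ^ 3)
      - q0 / 9 * (1 / r ^ 3) - q1 / 12 * (1 / r ^ 4) - q2 / 15 * (1 / r ^ 5)
      - q3 / 18 * (1 / r ^ 6)) (by
    intro r hr
    have hd := ((((((h.hR r hr).mul (hasDerivAt_inv_pow 4 r hr)).sub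
      ((h.hQ r hr).mul (hasDerivAt_inv_pow 3 r hr))).sub
      ((hasDerivAt_inv_pow 3 r hr).const_mul (q0 / 9))).sub
      ((hasDerivAt_inv_pow 4 r hr).const_mul (q1 / 12))).sub
      ((hasDerivAt_inv_pow 5 r hr).const_mul (q2 / 15))).sub
      ((hasDerivAt_inv_pow 6 r hr).const_mul (q3 / 18))
    refine hd.congr_deriv ?_
    rw [e r hr]; push_cast; field_simp; ring)
  obtain ⟨b, hb⟩ := const_of_deriv (φ := fun r => R r * (1 / r ^ 2) - 3 * (Q r * (1 / r ^ 1))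
      - q0 / 3 * (1 / r ^ 1) - q1 / 6 * (1 / r ^ 2) - q2 / 9 * (1 / r ^ 3)
      - q3 / 12 * (1 / r ^ 4)) (by
    intro r hr
    have hd := ((((((h.hR r hr).mul (hasDerivAt_inv_pow 2 r hr)).sub
      (((h.hQ r hr).mul (hasDerivAt_inv_pow 1 r hr)).const_mul 3)).sub
      ((hasDerivAt_inv_pow 1 r hr).const_mul (q0 / 3))).sub
      ((hasDerivAt_inv_pow 2 r hr).const_mul (q1 / 6))).sub
      ((hasDerivAt_inv_pow 3 r hr).const_mul (q2 / 9))).sub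
      ((hasDerivAt_inv_pow 4 r hr).const_mul (q3 / 12))
    refine hd.congr_deriv ?_
    rw [e r hr]; push_cast; field_simp; ring)
  refine ⟨-b / 2, 3 * a / 2, q1 / 24, 2 * q2 / 45, q3 / 24, fun r hr => ?_⟩
  rw [← ha r hr, ← hb r hr]; field_simp; ring

end
end

section
variable {K : Cst} {H : ℝ} {R Q R1 R2 R3 S S1 S2 S3 g g' g'' g2 p0 : ℝ → ℝ}

theorem Sys.lau (h : Sys K H R Q R1 R2 R3 S S1 S2 S3 g g' g'' g2 p0) {a d c0 a1 a2 a3 a4 : ℝ}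
    (hr : ∀ r, 0 < r → R r = a * r ^ 2 + d * r ^ 4 + c0 + a1 / r + a2 / r ^ 2 + a3 / r ^ 3
      + a4 / r ^ 4) :
    ∃ q, ∀ r, 0 < r →
      R1 r = 2 * a * r + 4 * d * r ^ 3 - a1 / r ^ 2 - 2 * a2 / r ^ 3 - 3 * a3 / r ^ 4
        - 4 * a4 / r ^ 5 ∧
      R2 r = 2 * a + 12 * d * r ^ 2 + 2 * a1 / r ^ 3 + 6 * a2 / r ^ 4 + 12 * a3 / r ^ 5
        + 20 * a4 / r ^ 6 ∧
      R3 r = 24 * d * r - 6 * a1 / r ^ 4 - 24 * a2 / r ^ 5 - 60 * a3 / r ^ 6 - 120 * a4 / r ^ 7 ∧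
      Q r = q + a * r + d * r ^ 3 / 3 - c0 / r - a1 / (2 * r ^ 2) - a2 / (3 * r ^ 3)
        - a3 / (4 * r ^ 4) - a4 / (5 * r ^ 5) := by
  have P := hasDerivAt_inv_pow
  have e1 : ∀ r, 0 < r → R1 r = 2 * a * r + 4 * d * r ^ 3 - a1 / r ^ 2 - 2 * a2 / r ^ 3
      - 3 * a3 / r ^ 4 - 4 * a4 / r ^ 5 := by
    intro r h0
    refine deriv_unique h0 hr (h.hR r h0) ?_
    have hd := (((((((hasDerivAt_pow 2 r).const_mul a).add ((hasDerivAt_pow 4 r).const_mul d)).add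
      (hasDerivAt_const r c0)).add ((P 1 r h0).const_mul a1)).add ((P 2 r h0).const_mul a2)).add
      ((P 3 r h0).const_mul a3)).add ((P 4 r h0).const_mul a4)
    refine (hd.congr_deriv (f' := _) ?_).congr_of_eventuallyEq (Filter.Eventually.of_forall ?_)
    · push_cast; field_simp; ring
    · intro x; simp only [Pi.add_apply]; ring
  have e2 : ∀ r, 0 < r → R2 r = 2 * a + 12 * d * r ^ 2 + 2 * a1 / r ^ 3 + 6 * a2 / r ^ 4
      + 12 * a3 / r ^ 5 + 20 * a4 / r ^ 6 := by
    intro r h0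
    refine deriv_unique h0 e1 (h.hR1 r h0) ?_
    have hd := ((((((hasDerivAt_pow 1 r).const_mul (2 * a)).add
      ((hasDerivAt_pow 3 r).const_mul (4 * d))).sub
      ((P 2 r h0).const_mul a1)).sub ((P 3 r h0).const_mul (2 * a2))).sub
      ((P 4 r h0).const_mul (3 * a3))).sub ((P 5 r h0).const_mul (4 * a4))
    refine (hd.congr_deriv (f' := _) ?_).congr_of_eventuallyEq (Filter.Eventually.of_forall ?_)
    · push_cast; field_simp; ring
    · intro x; simp only [Pi.add_apply, Pi.sub_apply]; ring
  have e3 : ∀ r, 0 < r → R3 r = 24 * d * r - 6 * a1 / r ^ 4 - 24 * a2 / r ^ 5 - 60 * a3 / r ^ 6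
      - 120 * a4 / r ^ 7 := by
    intro r h0
    refine deriv_unique h0 e2 (h.hR2 r h0) ?_
    have hd := ((((((hasDerivAt_const r (2 * a)).add
      ((hasDerivAt_pow 2 r).const_mul (12 * d))).add
      ((P 3 r h0).const_mul (2 * a1))).add ((P 4 r h0).const_mul (6 * a2))).add
      ((P 5 r h0).const_mul (12 * a3))).add ((P 6 r h0).const_mul (20 * a4)))
    refine (hd.congr_deriv (f' := _) ?_).congr_of_eventuallyEq (Filter.Eventually.of_forall ?_)
    · push_cast; field_simp; ring
    · intro x; simp only [Pi.add_apply]; ring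
  obtain ⟨q, hq⟩ := const_of_deriv (φ := fun r => Q r - (a * r ^ 1 + d / 3 * r ^ 3
      - c0 * (1 / r ^ 1) - a1 / 2 * (1 / r ^ 2) - a2 / 3 * (1 / r ^ 3) - a3 / 4 * (1 / r ^ 4)
      - a4 / 5 * (1 / r ^ 5))) (by
    intro r h0
    have hd := (h.hQ r h0).sub ((((((((hasDerivAt_pow 1 r).const_mul a).add
      ((hasDerivAt_pow 3 r).const_mul (d / 3))).sub
      ((P 1 r h0).const_mul c0)).sub ((P 2 r h0).const_mul (a1 / 2))).sub
      ((P 3 r h0).const_mul (a2 / 3))).sub ((P 4 r h0).const_mul (a3 / 4))).sub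
      ((P 5 r h0).const_mul (a4 / 5)))
    refine hd.congr_deriv ?_
    rw [hr r h0]
    push_cast; field_simp; ring)
  refine ⟨q, fun r h0 => ⟨e1 r h0, e2 r h0, e3 r h0, ?_⟩⟩
  rw [← hq r h0]
  ring
end

section
variable {K : Cst} {H : ℝ} {R Q R1 R2 R3 S S1 S2 S3 g g' g'' g2 p0 : ℝ → ℝ}

theorem Sys.Nab (h : Sys K H R Q R1 R2 R3 S S1 S2 S3 g g' g'' g2 p0) (t : ℝ) :
    ∃ n2 n3 n4 n5 : ℝ, (K.f t = 0 → K.f1 t = 0 → K.f2 t = 0 → K.k t = 0 → n5 = 0) ∧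
    ∀ r, 0 < r → 3 * K.f t * R r * R1 r
      + (g t - K.b t * S1 t / r + (3 * K.f t * S t - K.f1 t * S1 t / 2) / r ^ 2) * R1 r
      - 6 * K.f t * S t * R r / r ^ 3
      + S1 t * (2 * K.b t * R r + 2 * K.f1 t * R r / r - K.f1 t * Q r) / r ^ 2
      + n2 / r ^ 2 + n3 / r ^ 3 + n4 / r ^ 4 + n5 / r ^ 5
      - H * (K.f t * R3 r + ((K.f2 t + 3 * K.f t) / 2 / r + K.b1 t + K.c t * r) * R2 r
        - ((K.f2 t + 3 * K.f t) / 2 / r ^ 2 + K.b1 t / r - K.c t) * R1 r) = 0 := by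
  refine ⟨_, _, _, _, ?_, fun r hr => sub_eq_zero.2 (h.N r hr t)⟩
  intro h1 h2 h3 h4
  simp only [h1, h2, h3, h4]; ring
end

theorem quad_poly (a d c0 a1 a2 q f u0 u1 u2 v3 w1 w2 w3 n2 n3 n4 n5 e0 e1 e2 e3 d0 d1 d2 : ℝ)
    (hf : f ≠ 0)
    (h : ∀ r, 0 < r →
      3 * f * (a * r ^ 2 + d * r ^ 4 + c0 + a1 / r + a2 / r ^ 2)
          * (2 * a * r + 4 * d * r ^ 3 - a1 / r ^ 2 - 2 * a2 / r ^ 3)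
        + (u0 + u1 / r + u2 / r ^ 2) * (2 * a * r + 4 * d * r ^ 3 - a1 / r ^ 2 - 2 * a2 / r ^ 3)
        + (v3 / r ^ 3 + w2 / r ^ 2 + w3 / r ^ 3) * (a * r ^ 2 + d * r ^ 4 + c0 + a1 / r + a2 / r ^ 2)
        + w1 / r ^ 2 * (q + a * r + d * r ^ 3 / 3 - c0 / r - a1 / (2 * r ^ 2) - a2 / (3 * r ^ 3))
        + n2 / r ^ 2 + n3 / r ^ 3 + n4 / r ^ 4 + n5 / r ^ 5
        + e3 * (24 * d * r - 6 * a1 / r ^ 4 - 24 * a2 / r ^ 5)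
        + (e2 / r + e1 + e0 * r) * (2 * a + 12 * d * r ^ 2 + 2 * a1 / r ^ 3 + 6 * a2 / r ^ 4)
        + (d2 / r ^ 2 + d1 / r + d0) * (2 * a * r + 4 * d * r ^ 3 - a1 / r ^ 2 - 2 * a2 / r ^ 3)
        = 0) : d = 0 ∧ a = 0 := by
  have key := polyz [(3 * f) * a2 * (-2 * a2) + u2 * (-2 * a2) + v3 * a2 + w3 * a2 + w1 * (-a2 / 3) + n5 + e3 * (-24 * a2) + e2 * (6 * a2) + d2 * (-2 * a2),
    (3 * f) * a1 * (-2 * a2) + (3 * f) * a2 * (-a1) + u1 * (-2 * a2) + u2 * (-a1) + v3 * a1 + w2 * a2 + w3 * a1 + w1 * (-a1 / 2) + n4 + e3 * (-6 * a1) + e2 * (2 * a1) + e1 * (6 * a2) + d2 * (-a1) + d1 * (-2 * a2),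
    (3 * f) * c0 * (-2 * a2) + (3 * f) * a1 * (-a1) + u0 * (-2 * a2) + u1 * (-a1) + v3 * c0 + w2 * a1 + w3 * c0 + w1 * (-c0) + n3 + e1 * (2 * a1) + e0 * (6 * a2) + d1 * (-a1) + d0 * (-2 * a2),
    (3 * f) * c0 * (-a1) + u0 * (-a1) + w2 * c0 + w1 * q + n2 + e0 * (2 * a1) + d0 * (-a1),
    (3 * f) * a * (-2 * a2) + (3 * f) * a2 * (2 * a) + u2 * (2 * a) + v3 * a + w3 * a + w1 * a + e2 * (2 * a) + d2 * (2 * a),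
    (3 * f) * a * (-a1) + (3 * f) * a1 * (2 * a) + u1 * (2 * a) + w2 * a + e1 * (2 * a) + d1 * (2 * a),
    (3 * f) * d * (-2 * a2) + (3 * f) * c0 * (2 * a) + (3 * f) * a2 * (4 * d) + u0 * (2 * a) + u2 * (4 * d) + v3 * d + w3 * d + w1 * (d / 3) + e3 * (24 * d) + e2 * (12 * d) + e0 * (2 * a) + d2 * (4 * d) + d0 * (2 * a),
    (3 * f) * d * (-a1) + (3 * f) * a1 * (4 * d) + u1 * (4 * d) + w2 * d + e1 * (12 * d) + d1 * (4 * d),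
    (3 * f) * a * (2 * a) + (3 * f) * c0 * (4 * d) + u0 * (4 * d) + e0 * (12 * d) + d0 * (4 * d),
    0,
    (3 * f) * a * (4 * d) + (3 * f) * d * (2 * a),
    0,
    (3 * f) * d * (4 * d)] (by
    intro r hr
    refine Eq.trans ?_ (mul_eq_zero_of_right (r ^ 5) (h r hr))
    simp only [List.foldr_cons, List.foldr_nil]
    field_simp
    ring)
  simp only [List.forall_mem_cons] at key
  obtain ⟨-, -, -, -, -, -, -, -, k8, -, -, -, k12, -⟩ := key
  have hd : d = 0 := by
    have h2 : f * d ^ 2 = 0 := by linarith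
    simpa [hf] using h2
  refine ⟨hd, ?_⟩
  subst hd
  have h2 : f * a ^ 2 = 0 := by linarith
  simpa [hf] using h2

section
variable {K : Cst} {H : ℝ} {R Q R1 R2 R3 S S1 S2 S3 g g' g'' g2 p0 : ℝ → ℝ}

theorem Sys.quadKill (h : Sys K H R Q R1 R2 R3 S S1 S2 S3 g g' g'' g2 p0) {a d c0 a1 a2 t : ℝ}
    (hr : ∀ r, 0 < r → R r = a * r ^ 2 + d * r ^ 4 + c0 + a1 / r + a2 / r ^ 2)
    (ht : K.f t ≠ 0) : d = 0 ∧ a = 0 := by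
  obtain ⟨q, hq⟩ := h.lau (a := a) (d := d) (c0 := c0) (a1 := a1) (a2 := a2) (a3 := 0) (a4 := 0)
    (fun r h0 => by rw [hr r h0]; ring)
  obtain ⟨n2, n3, n4, n5, -, hn⟩ := h.Nab t
  refine quad_poly a d c0 a1 a2 q (K.f t) (g t) (-(K.b t * S1 t))
    (3 * K.f t * S t - K.f1 t * S1 t / 2)
    (-6 * K.f t * S t) (-K.f1 t * S1 t) (2 * K.b t * S1 t) (2 * K.f1 t * S1 t)
    n2 n3 n4 n5 (-H * K.c t) (-H * K.b1 t) (-H * ((K.f2 t + 3 * K.f t) / 2)) (-H * K.f t)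
    (-H * K.c t) (H * K.b1 t) (H * ((K.f2 t + 3 * K.f t) / 2)) ht (fun r h0 => ?_)
  have hN := hn r h0
  obtain ⟨e1, e2, e3, e4⟩ := hq r h0
  rw [hr r h0, e1, e2, e3, e4] at hN
  refine Eq.trans ?_ hN
  ring
end

theorem const_line {φ : ℝ → ℝ} (h : ∀ t, HasDerivAt φ 0 t) (x y : ℝ) : φ x = φ y :=
  is_const_of_deriv_eq_zero (fun t => (h t).differentiableAt) (fun t => (h t).deriv) x y

/-- Solutions of `y'' = -m² y` with `m` a positive integer are `2π`-periodic. -/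
theorem harm_periodic (m : ℕ) (hm : (m : ℝ) ≠ 0) {y z : ℝ → ℝ} (hy : ∀ t, HasDerivAt y (z t) t)
    (hz : ∀ t, HasDerivAt z (-(m : ℝ) ^ 2 * y t) t) (t : ℝ) :
    y (t + 2 * π) = y t ∧ z (t + 2 * π) = z t := by
  have ec : cos (m * (t + 2 * π)) = cos (m * t) := by
    rw [show (m : ℝ) * (t + 2 * π) = m * t + m * (2 * π) by ring, cos_add_nat_mul_two_pi]
  have es : sin (m * (t + 2 * π)) = sin (m * t) := by
    rw [show (m : ℝ) * (t + 2 * π) = m * t + m * (2 * π) by ring, sin_add_nat_mul_two_pi]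
  have h1 := const_line (φ := fun t => y t * cos (m * t) - z t / m * sin (m * t)) (by
    intro t
    have := ((hy t).mul (hasDerivAt_cos_mul m t)).sub
      (((hz t).div_const m).mul (hasDerivAt_sin_mul m t))
    refine this.congr_deriv ?_
    field_simp; ring) (t + 2 * π) t
  have h2 := const_line (φ := fun t => y t * sin (m * t) + z t / m * cos (m * t)) (by
    intro t
    have := ((hy t).mul (hasDerivAt_sin_mul m t)).add
      (((hz t).div_const m).mul (hasDerivAt_cos_mul m t))
    refine this.congr_deriv ?_
    field_simp; ring) (t + 2 * π) t
  simp only [ec, es] at h1 h2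
  have hcs := sin_sq_add_cos_sq (m * t)
  have e1 : y (t + 2 * π) = y t := by
    linear_combination cos (m * t) * h1 + sin (m * t) * h2 - (y (t + 2 * π) - y t) * hcs
  have e2 : z (t + 2 * π) / m = z t / m := by
    linear_combination -sin (m * t) * h1 + cos (m * t) * h2
      - (z (t + 2 * π) / m - z t / m) * hcs
  refine ⟨e1, ?_⟩
  field_simp at e2
  exact e2

theorem theta_part {f f1 S S1 S2 S3 : ℝ → ℝ} {t0 q3 : ℝ}
    (hf1 : ∀ t, HasDerivAt f1 (-f t) t)
    (hn : ∀ t, f t ^ 2 + f1 t ^ 2 ≠ 0) (h0 : f1 t0 = 0)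
    (hS : ∀ t, HasDerivAt S (S1 t) t)
    (hS2 : ∀ t, HasDerivAt S2 (S3 t) t)
    (h : ∀ t, f1 t * S3 t - 4 * f t * S2 t + 4 * f1 t * S1 t - 16 * f t * S t = -6 * f t * q3)
    (t : ℝ) : S2 t = 3 * q3 / 2 - 4 * S t := by
  have hW : ∀ t, HasDerivAt (fun t => S2 t + 4 * S t - 3 * q3 / 2) (S3 t + 4 * S1 t) t := fun t =>
    ((hS2 t).add ((hS t).const_mul 4)).sub_const _
  have hc : ∀ t, f1 t ^ 4 * (S2 t + 4 * S t - 3 * q3 / 2) = 0 := by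
    intro t
    have := const_line (φ := fun t => f1 t ^ 4 * (S2 t + 4 * S t - 3 * q3 / 2)) (by
      intro t
      refine (((hf1 t).pow 4).mul (hW t)).congr_deriv ?_
      simp only [Pi.pow_apply]
      push_cast
      linear_combination f1 t ^ 3 * h t) t t0
    rw [this, h0]; ring
  by_contra hne
  have hne' : S2 t + 4 * S t - 3 * q3 / 2 ≠ 0 := fun e => hne (by linarith)
  have ev : ∀ᶠ x in nhds t, S2 x + 4 * S x - 3 * q3 / 2 ≠ 0 :=
    (hW t).continuousAt.eventually_ne hne'
  have ev1 : ∀ᶠ x in nhds t, f1 x = 0 := by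
    filter_upwards [ev] with x hx
    have := hc x
    simpa [hx] using this
  have e1 : f1 t = 0 := ev1.self_of_nhds
  have e2 : -f t = 0 := by
    refine (hf1 t).unique ((hasDerivAt_const t (0:ℝ)).congr_of_eventuallyEq ?_)
    filter_upwards [ev1] with x hx using hx
  apply hn t
  rw [e1, neg_eq_zero.1 e2]; ring

theorem g_part {f f1 S S1 S2 g g' g'' : ℝ → ℝ} {l q1 q3 : ℝ}
    (hf : ∀ t, HasDerivAt f (f1 t) t) (hf1 : ∀ t, HasDerivAt f1 (-f t) t)
    (hS : ∀ t, HasDerivAt S (S1 t) t) (hS1 : ∀ t, HasDerivAt S1 (S2 t) t)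
    (hg : ∀ t, HasDerivAt g (g' t) t) (hg' : ∀ t, HasDerivAt g' (g'' t) t)
    (h2 : ∀ t, S2 t = 3 * q3 / 2 - 4 * S t)
    (h : ∀ t, g'' t + g t - 2 * (l * f t) * S2 t - 5 * (l * f1 t) * S1 t + 2 * (l * f t) * S t
      = f t * q1) (t : ℝ) :
    S (t + 2 * π) = S t ∧ S1 (t + 2 * π) = S1 t ∧
      g (t + 2 * π) - g t = -(q1 - 3 / 4 * l * q3) * π * f1 t := by
  have pS := harm_periodic 2 (by norm_num) (y := fun t => S t - 3 * q3 / 8) (z := S1)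
    (fun t => (hS t).sub_const _) (fun t => (hS1 t).congr_deriv (by rw [h2]; push_cast; ring)) t
  have pf := harm_periodic 1 (by norm_num) (y := f) (z := f1) hf
    (fun t => (hf1 t).congr_deriv (by push_cast; ring)) t
  have s1 : S (t + 2 * π) = S t := by linarith [pS.1]
  refine ⟨s1, pS.2, ?_⟩
  have pg := harm_periodic 1 (by norm_num)
    (y := fun t => g t - 5 / 2 * l * (f t * (S t - 3 * q3 / 8))
      + (q1 - 3 / 4 * l * q3) / 2 * (t * f1 t))
    (z := fun t => g' t - 5 / 2 * l * (f1 t * (S t - 3 * q3 / 8) + f t * S1 t)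
      + (q1 - 3 / 4 * l * q3) / 2 * (1 * f1 t + t * (-f t)))
    (fun t => ((hg t).sub (((hf t).mul ((hS t).sub_const _)).const_mul _)).add
      (((hasDerivAt_id' t).mul (hf1 t)).const_mul _))
    (fun t => by
      have := ((hg' t).sub ((((hf1 t).mul ((hS t).sub_const (3 * q3 / 8))).add
        ((hf t).mul (hS1 t))).const_mul (5 / 2 * l))).add
        ((((hf1 t).const_mul 1).add ((hasDerivAt_id' t).mul (hf t).neg)).const_mul
          ((q1 - 3 / 4 * l * q3) / 2))
      refine this.congr_deriv ?_
      have e := h t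
      simp only [Pi.neg_apply]
      rw [h2] at e ⊢
      push_cast
      linear_combination e) t
  have := pg.1
  simp only [s1, pf.1, pf.2] at this
  linear_combination this

theorem radial_part {R R1 R2 : ℝ → ℝ} {l q3 : ℝ}
    (hR : ∀ r, 0 < r → HasDerivAt R (R1 r) r) (hR1 : ∀ r, 0 < r → HasDerivAt R1 (R2 r) r)
    (h : ∀ r, 0 < r → (1 + l * r ^ 2) * R2 r
      = (1 / r - 2 * l * r) * R1 r - 3 / 4 * l * q3 / r ^ 2 - 3 * q3 / r ^ 4) :
    (∃ c0, ∀ r, 0 < r → R r = c0 - 3 / 8 * q3 / r ^ 2) ∨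
    (l = 0 ∧ ∃ a c0, ∀ r, 0 < r → R r = a * r ^ 2 + c0 - 3 / 8 * q3 / r ^ 2) ∨
    (0 < l ∧ ∃ κ c0, ∀ r, 0 < r → R r = c0 - 3 / 8 * q3 / r ^ 2 + κ / √(1 + l * r ^ 2)) := by
  have hz : ∀ r, 0 < r → HasDerivAt (fun r => R1 r - 3 / 4 * q3 * (1 / r ^ 3))
      (R2 r + 9 / 4 * q3 / r ^ 4) r := by
    intro r hr
    refine ((hR1 r hr).sub ((hasDerivAt_inv_pow 3 r hr).const_mul (3 / 4 * q3))).congr_deriv ?_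
    push_cast; ring
  have ode : ∀ r, 0 < r → (1 + l * r ^ 2) * (R2 r + 9 / 4 * q3 / r ^ 4)
      = (1 / r - 2 * l * r) * (R1 r - 3 / 4 * q3 * (1 / r ^ 3)) := by
    intro r hr
    rw [mul_add, h r hr]; field_simp; ring
  have hu : ∀ r, HasDerivAt (fun r : ℝ => 1 + l * r ^ 2) (2 * l * r) r := by
    intro r
    refine (((hasDerivAt_pow 2 r).const_mul l).const_add 1).congr_deriv ?_
    push_cast; ring
  rcases lt_trichotomy l 0 with hl | hl | hl
  · left
    obtain ⟨a, ha⟩ := const_of_deriv (φ := fun r => (R1 r - 3 / 4 * q3 * (1 / r ^ 3)) ^ 2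
        * (1 + l * r ^ 2) ^ 3 * (1 / r ^ 2)) (by
      intro r hr
      refine ((((hz r hr).pow 2).mul ((hu r).pow 3)).mul
        (hasDerivAt_inv_pow 2 r hr)).congr_deriv ?_
      simp only [Pi.pow_apply, Pi.mul_apply]
      push_cast
      have := ode r hr
      generalize R1 r - 3 / 4 * q3 * (1 / r ^ 3) = z at *
      generalize R2 r + 9 / 4 * q3 / r ^ 4 = z' at *
      have e : (2 * z ^ (2 - 1) * z' * (1 + l * r ^ 2) ^ 3
          + z ^ 2 * (3 * (1 + l * r ^ 2) ^ (3 - 1) * (2 * l * r))) * (1 / r ^ 2)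
          + z ^ 2 * (1 + l * r ^ 2) ^ 3 * (-2 / r ^ (2 + 1))
          = 2 * z * (1 + l * r ^ 2) ^ 2 * (1 / r ^ 2) * ((1 + l * r ^ 2) * z'
            - (1 / r - 2 * l * r) * z) := by
        field_simp
        ring
      rw [e, this]; ring)
    have hl' : 0 < -l := by linarith
    have hs : 0 < √(-l) := Real.sqrt_pos.2 hl'
    have hs2 : √(-l) ^ 2 = -l := Real.sq_sqrt hl'.le
    have e0 : 1 + l * (1 / √(-l)) ^ 2 = 0 := by
      have hl0 : l ≠ 0 := hl.ne
      rw [div_pow, hs2]; grind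
    have a0 : a = 0 := by
      rw [← ha (1 / √(-l)) (by positivity), e0]; ring
    have z0 : ∀ r, 0 < r → R1 r - 3 / 4 * q3 * (1 / r ^ 3) = 0 := by
      intro r hr
      by_cases hu0 : 1 + l * r ^ 2 = 0
      · have := ode r hr
        rw [hu0, zero_mul] at this
        have e3 : 1 / r - 2 * l * r ≠ 0 := by
          have : 0 < 1 / r - 2 * l * r := by
            have : 0 < 1 / r := by positivity
            have : 0 < -l * r := by positivity
            linarith
          exact this.ne'
        exact (mul_eq_zero.1 this.symm).resolve_left e3
      · have := ha r hr
        simp only [a0] at this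
        have h1 := (mul_eq_zero.1 this).resolve_right (by positivity)
        have h2 := (mul_eq_zero.1 h1).resolve_right (pow_ne_zero 3 hu0)
        simpa using h2
    obtain ⟨c0, hc⟩ := const_of_deriv (φ := fun r => R r + 3 / 8 * q3 * (1 / r ^ 2)) (by
      intro r hr
      refine ((hR r hr).add ((hasDerivAt_inv_pow 2 r hr).const_mul (3 / 8 * q3))).congr_deriv ?_
      rw [← z0 r hr]
      push_cast; ring)
    exact ⟨c0, fun r hr => by rw [← hc r hr]; ring⟩
  · right; left
    refine ⟨hl, ?_⟩
    subst hl
    obtain ⟨a, ha⟩ := const_of_deriv (φ := fun r => (R1 r - 3 / 4 * q3 * (1 / r ^ 3))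
        * (1 / r ^ 1)) (by
      intro r hr
      refine ((hz r hr).mul (hasDerivAt_inv_pow 1 r hr)).congr_deriv ?_
      have := ode r hr
      rw [zero_mul, add_zero, one_mul] at this
      rw [this]
      push_cast; field_simp; ring)
    obtain ⟨c0, hc⟩ := const_of_deriv (φ := fun r => R r + 3 / 8 * q3 * (1 / r ^ 2)
        - a / 2 * r ^ 2) (by
      intro r hr
      refine (((hR r hr).add ((hasDerivAt_inv_pow 2 r hr).const_mul (3 / 8 * q3))).sub
        ((hasDerivAt_pow 2 r).const_mul (a / 2))).congr_deriv ?_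
      rw [← ha r hr]
      push_cast; field_simp; ring)
    exact ⟨a / 2, c0, fun r hr => by rw [← hc r hr]; ring⟩
  · right; right
    refine ⟨hl, ?_⟩
    have hpos : ∀ r : ℝ, 0 < 1 + l * r ^ 2 := fun r => by positivity
    have hs : ∀ r : ℝ, 0 < √(1 + l * r ^ 2) := fun r => Real.sqrt_pos.2 (hpos r)
    have hs2 : ∀ r : ℝ, √(1 + l * r ^ 2) ^ 2 = 1 + l * r ^ 2 := fun r => Real.sq_sqrt (hpos r).le
    have hds : ∀ r : ℝ, HasDerivAt (fun r => √(1 + l * r ^ 2)) (l * r / √(1 + l * r ^ 2)) r := by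
      intro r
      refine ((hu r).sqrt (hpos r).ne').congr_deriv ?_
      have := hs r
      field_simp
    obtain ⟨a, ha⟩ := const_of_deriv (φ := fun r => (R1 r - 3 / 4 * q3 * (1 / r ^ 3))
        * √(1 + l * r ^ 2) ^ 3 * (1 / r ^ 1)) (by
      intro r hr
      refine (((hz r hr).mul ((hds r).pow 3)).mul
        (hasDerivAt_inv_pow 1 r hr)).congr_deriv ?_
      simp only [Pi.pow_apply, Pi.mul_apply]
      push_cast
      have := ode r hr
      generalize R1 r - 3 / 4 * q3 * (1 / r ^ 3) = z at *
      generalize R2 r + 9 / 4 * q3 / r ^ 4 = z' at *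
      have h1 := hs r
      have h2 := hs2 r
      rw [← h2] at this
      generalize √(1 + l * r ^ 2) = s at *
      have e : (z' * s ^ 3 + z * (3 * s ^ (3 - 1) * (l * r / s))) * (1 / r ^ 1)
          + z * s ^ 3 * (-1 / r ^ (1 + 1))
          = s / r * ((s ^ 2 * z' - (1 / r - 2 * l * r) * z) + z / r * (1 + l * r ^ 2 - s ^ 2)) := by
        field_simp
        ring
      rw [e, this, h2]; ring)
    obtain ⟨c0, hc⟩ := const_of_deriv (φ := fun r => R r + 3 / 8 * q3 * (1 / r ^ 2)
        + a / l * (√(1 + l * r ^ 2))⁻¹) (by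
      intro r hr
      refine (((hR r hr).add ((hasDerivAt_inv_pow 2 r hr).const_mul (3 / 8 * q3))).add
        (((hds r).inv (hs r).ne').const_mul (a / l))).congr_deriv ?_
      rw [← ha r hr]
      have := hs r
      push_cast; field_simp; ring)
    exact ⟨-a / l, c0, fun r hr => by rw [← hc r hr]; ring⟩

theorem Cst.exists_f_ne (K : Cst) (h : ¬ (K.A1 = 0 ∧ K.A2 = 0 ∧ K.A3 = 0 ∧ K.A4 = 0)) :
    ∃ t, K.f t ≠ 0 := by
  by_contra! hc
  apply h
  have o0 := hc 0
  have o2 := hc (π / 2)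
  have op := hc (π / 3)
  have om := hc (-(π / 3))
  have e1 : cos (3 * (π / 2)) = 0 := by
    rw [show 3 * (π / 2) = π / 2 + π by ring, cos_add_pi, cos_pi_div_two, neg_zero]
  have e2 : sin (3 * (π / 2)) = -1 := by
    rw [show 3 * (π / 2) = π / 2 + π by ring, sin_add_pi, sin_pi_div_two]
  have e3 : 3 * (π / 3) = π := by ring
  have e4 : 3 * -(π / 3) = -π := by ring
  simp only [Cst.f] at o0 o2 op om
  rw [e4, cos_neg, sin_neg, cos_neg, sin_neg, cos_pi, sin_pi, cos_pi_div_three,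
    sin_pi_div_three] at om
  rw [e3, cos_pi, sin_pi, cos_pi_div_three, sin_pi_div_three] at op
  rw [e1, e2, cos_pi_div_two, sin_pi_div_two] at o2
  rw [mul_zero, cos_zero, sin_zero] at o0
  have h3 : (√3 : ℝ) ≠ 0 := by positivity
  have h4 : K.A4 = 0 := by
    have : K.A4 * √3 = 0 := by linarith
    simpa [h3] using this
  rw [h4] at o0 o2 op om
  refine ⟨?_, ?_, ?_, h4⟩ <;> linarith

/-- The second alternative of the classification. -/
def Concl (K : Cst) (R : ℝ → ℝ) : Prop :=
  ∃ a₃ a₄ c₀ c₂ : ℝ, (∀ r, 0 < r → R r = a₃ / r + a₄ * r ^ 2 + c₀ + c₂ / r ^ 2) ∧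
    a₃ * a₄ = 0 ∧ (a₄ ≠ 0 → K.C1 = 0 ∧ K.C2 = 0)

theorem Concl.simple {K : Cst} {R : ℝ → ℝ} (c0 a1 a2 : ℝ)
    (h : ∀ r, 0 < r → R r = c0 + a1 / r + a2 / r ^ 2) : Concl K R :=
  ⟨a1, 0, c0, a2, fun r hr => by rw [h r hr]; ring, by ring, fun h => absurd rfl h⟩

section
variable {K : Cst} {H : ℝ} {R Q R1 R2 R3 S S1 S2 S3 g g' g'' g2 p0 : ℝ → ℝ}

theorem Sys.Lcoef (h : Sys K H R Q R1 R2 R3 S S1 S2 S3 g g' g'' g2 p0) {a c0 a1 a2 a3 a4 : ℝ}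
    (hr : ∀ r, 0 < r → R r = a * r ^ 2 + c0 + a1 / r + a2 / r ^ 2 + a3 / r ^ 3 + a4 / r ^ 4)
    (hA1 : K.A1 = 0) (hA2 : K.A2 = 0) (t : ℝ) :
    -24 / 5 * K.f t * a4 = 0 ∧
    -15 / 4 * K.f t * a3 - 6 * K.b1 t * a4 = 0 ∧
    -8 / 3 * K.f t * a2 - 5 * K.b1 t * a3 - 4 * K.c t * a4
      - (-(1 / 3) * (-7 * K.f2 t * S t - 7 * K.f1 t * S1 t
            + 3 / 2 * (6 * K.k t - 7 * K.f1 t) * S1 t + 2 * K.f2 t * S2 t + 1 / 2 * K.f1 t * S3 t)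
          + (K.f2 t + 3 * K.f t) * S t - 3 * K.k t * S1 t + 3 * K.f t * S t
          - 1 / 2 * K.f1 t * S1 t) = 0 ∧
    -3 / 2 * K.f t * a1 - 4 * K.b1 t * a2 - 3 * K.c t * a3
      - (-(1 / 2) * (K.b t * S3 t + 4 * K.b1 t * S2 t + (24 * K.B0 - 20 * K.b t) * S1 t
          - 8 * K.b1 t * S t)) = 0 ∧
    -3 * K.b1 t * a1 - 2 * K.c t * a2
      - (g'' t + g t - 2 * K.c t * S2 t - 5 * K.c1 t * S1 t + 2 * K.c t * S t) = 0 := by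
  obtain ⟨q, hq⟩ := h.lau (a := a) (d := 0) (c0 := c0) (a1 := a1) (a2 := a2) (a3 := a3) (a4 := a4)
    (fun r h0 => by rw [hr r h0]; ring)
  have e : K.f2 t = -K.f t := by simp only [Cst.f, Cst.f2, hA1, hA2]; ring
  have hL := fun r h0 => h.L r h0 t
  generalize -(1 / 3) * (-7 * K.f2 t * S t - 7 * K.f1 t * S1 t
            + 3 / 2 * (6 * K.k t - 7 * K.f1 t) * S1 t + 2 * K.f2 t * S2 t + 1 / 2 * K.f1 t * S3 t)
          + (K.f2 t + 3 * K.f t) * S t - 3 * K.k t * S1 t + 3 * K.f t * S t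
          - 1 / 2 * K.f1 t * S1 t = P3 at *
  generalize -(1 / 2) * (K.b t * S3 t + 4 * K.b1 t * S2 t + (24 * K.B0 - 20 * K.b t) * S1 t
          - 8 * K.b1 t * S t) = P2 at *
  generalize g'' t + g t - 2 * K.c t * S2 t - 5 * K.c1 t * S1 t + 2 * K.c t * S t = P1 at *
  rw [e] at hL
  have key := polyz [-24 / 5 * K.f t * a4, -15 / 4 * K.f t * a3 - 6 * K.b1 t * a4,
    -8 / 3 * K.f t * a2 - 5 * K.b1 t * a3 - 4 * K.c t * a4 - P3,
    -3 / 2 * K.f t * a1 - 4 * K.b1 t * a2 - 3 * K.c t * a3 - P2,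
    -3 * K.b1 t * a1 - 2 * K.c t * a2 - P1,
    -2 * K.b1 t * c0 - K.c t * a1 - K.f t * q - p0 t, 0, 0, 2 * a * K.c t] (by
    intro r h0
    refine Eq.trans ?_ (mul_eq_zero_of_right (r ^ 5) (sub_eq_zero.2 (hL r h0)))
    obtain ⟨e1, e2, e3, e4⟩ := hq r h0
    rw [hr r h0, e1, e4]
    simp only [List.foldr_cons, List.foldr_nil]
    field_simp
    ring)
  simp only [List.forall_mem_cons] at key
  obtain ⟨k0, k1, k2, k3, k4, -⟩ := key
  exact ⟨k0, k1, k2, k3, k4⟩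

theorem Sys.Ncoef (h : Sys K H R Q R1 R2 R3 S S1 S2 S3 g g' g'' g2 p0) {a c0 a1 a2 a3 : ℝ}
    (hr : ∀ r, 0 < r → R r = a * r ^ 2 + c0 + a1 / r + a2 / r ^ 2 + a3 / r ^ 3)
    (hA1 : K.A1 = 0) (hA2 : K.A2 = 0) (hA3 : K.A3 = 0) (hA4 : K.A4 = 0) (t : ℝ) :
    5 * a3 * K.b t * S1 t - 15 * H * a3 * K.b1 t = 0 ∧
    2 * a * g t - 4 * H * a * K.c t = 0 := by
  obtain ⟨q, hq⟩ := h.lau (a := a) (d := 0) (c0 := c0) (a1 := a1) (a2 := a2) (a3 := a3) (a4 := 0)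
    (fun r h0 => by rw [hr r h0]; ring)
  have f0 : K.f t = 0 := by simp only [Cst.f, hA1, hA2, hA3, hA4]; ring
  have f1 : K.f1 t = 0 := by simp only [Cst.f1, hA1, hA2, hA3, hA4]; ring
  have f2 : K.f2 t = 0 := by simp only [Cst.f2, hA1, hA2, hA3, hA4]; ring
  have fk : K.k t = 0 := by simp only [Cst.k, hA1, hA2, hA3, hA4]; ring
  obtain ⟨n2, n3, n4, n5, n50, hn⟩ := h.Nab t
  rw [n50 f0 f1 f2 fk, f0, f1, f2] at hn
  have key := polyz [5 * a3 * K.b t * S1 t - 15 * H * a3 * K.b1 t,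
    -3 * g t * a3 + 4 * a2 * K.b t * S1 t + n4 - H * (8 * a2 * K.b1 t + 9 * a3 * K.c t),
    -2 * a2 * g t + 3 * a1 * K.b t * S1 t + n3 - H * (3 * a1 * K.b1 t + 4 * a2 * K.c t),
    -a1 * g t + 2 * K.b t * S1 t * c0 + n2 - H * a1 * K.c t, 0, 0,
    2 * a * g t - 4 * H * a * K.c t] (by
    intro r h0
    refine Eq.trans ?_ (mul_eq_zero_of_right (r ^ 5) (hn r h0))
    obtain ⟨e1, e2, e3, e4⟩ := hq r h0
    rw [hr r h0, e1, e2]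
    simp only [List.foldr_cons, List.foldr_nil]
    field_simp
    ring)
  simp only [List.forall_mem_cons] at key
  obtain ⟨k0, -, -, -, -, -, k6, -⟩ := key
  exact ⟨k0, k6⟩

theorem Sys.case2 (h : Sys K H R Q R1 R2 R3 S S1 S2 S3 g g' g'' g2 p0)
    (hA : ¬ (K.A1 = 0 ∧ K.A2 = 0)) : Concl K R := by
  obtain ⟨t, ht⟩ := K.exists_f_ne (fun h => hA ⟨h.1, h.2.1⟩)
  have hp : InP fun r => -9 * Q r + 15 * R r / r - 3 * R1 r := by
    by_cases h1 : K.A1 = 0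
    · exact InP.of_mul (fun h2 => hA ⟨h1, h2⟩) h.sep.2.1
    · exact InP.of_mul h1 h.sep.1
  obtain ⟨a, d, c0, a1, a2, hR⟩ := h.solve3 hp
  obtain ⟨rfl, rfl⟩ := h.quadKill hR ht
  exact Concl.simple c0 a1 a2 (fun r hr => by rw [hR r hr]; ring)

theorem Sys.inP2 (h : Sys K H R Q R1 R2 R3 S S1 S2 S3 g g' g'' g2 p0)
    (hB : ¬ (K.B1 = 0 ∧ K.B2 = 0)) : InP fun r => r * R1 r - 2 * R r := by
  by_cases h1 : K.B1 = 0
  · exact InP.of_mul (fun h2 => hB ⟨h1, h2⟩) h.sep.2.2.2.2.2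
  · exact InP.of_mul h1 h.sep.2.2.2.2.1

theorem Sys.case3a (h : Sys K H R Q R1 R2 R3 S S1 S2 S3 g g' g'' g2 p0)
    (hA1 : K.A1 = 0) (hA2 : K.A2 = 0) (hA : ¬ (K.A3 = 0 ∧ K.A4 = 0))
    (hB : ¬ (K.B1 = 0 ∧ K.B2 = 0)) : Concl K R := by
  obtain ⟨t, ht⟩ := K.exists_f_ne (fun h => hA h.2.2)
  obtain ⟨a, c0, a1, a2, a3, hR⟩ := h.solve2 (h.inP2 hB)
  have := (h.Lcoef (a := a) (c0 := c0) (a1 := a1) (a2 := a2) (a3 := a3) (a4 := 0)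
    (fun r hr => by rw [hR r hr]; ring) hA1 hA2 t).2.1
  have h3 : K.f t * a3 = 0 := by linarith
  obtain rfl : a3 = 0 := by simpa [ht] using h3
  obtain ⟨-, rfl⟩ := h.quadKill (d := 0) (a := a) (c0 := c0) (a1 := a1) (a2 := a2)
    (fun r hr => by rw [hR r hr]; ring) ht
  exact Concl.simple c0 a1 a2 (fun r hr => by rw [hR r hr]; ring)

theorem Sys.case3b (h : Sys K H R Q R1 R2 R3 S S1 S2 S3 g g' g'' g2 p0)
    (hA1 : K.A1 = 0) (hA2 : K.A2 = 0) (hA : K.A3 * K.C2 - K.A4 * K.C1 ≠ 0) : Concl K R := by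
  obtain ⟨t, ht⟩ := K.exists_f_ne (fun h => hA (by rw [h.2.2.1, h.2.2.2]; ring))
  have hp : InP fun r => r ^ 2 * R1 r := by
    refine InP.of_mul hA ?_
    exact InP.lin K.A3 (-K.A4) h.sep.2.2.2.1 h.sep.2.2.1 (fun r hr => by ring)
  obtain ⟨c0, a1, a2, a3, a4, hR⟩ := h.solveC hp
  obtain ⟨k0, k1, -⟩ := h.Lcoef (a := 0) (c0 := c0) (a1 := a1) (a2 := a2) (a3 := a3) (a4 := a4)
    (fun r hr => by rw [hR r hr]; ring) hA1 hA2 t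
  have h4 : K.f t * a4 = 0 := by linarith
  obtain rfl : a4 = 0 := by simpa [ht] using h4
  have h3 : K.f t * a3 = 0 := by linarith
  obtain rfl : a3 = 0 := by simpa [ht] using h3
  exact Concl.simple c0 a1 a2 (fun r hr => by rw [hR r hr]; ring)

theorem Cst.b1_zero (K : Cst) {a : ℝ} (h : ∀ t, a * K.b1 t = 0) (hB : ¬ (K.B1 = 0 ∧ K.B2 = 0)) :
    a = 0 := by
  by_contra ha
  apply hB
  have h1 := h 0
  have h2 := h (π / 4)
  simp only [Cst.b1] at h1 h2
  rw [show 2 * (π / 4) = π / 2 by ring, cos_pi_div_two, sin_pi_div_two] at h2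
  rw [mul_zero, cos_zero, sin_zero] at h1
  simp [ha] at h1 h2
  exact ⟨h2, h1⟩

theorem Cst.c_zero (K : Cst) {a : ℝ} (h : ∀ t, a * K.c t = 0) (hC : ¬ (K.C1 = 0 ∧ K.C2 = 0)) :
    a = 0 := by
  by_contra ha
  apply hC
  have h1 := h 0
  have h2 := h (π / 2)
  simp only [Cst.c] at h1 h2
  rw [cos_pi_div_two, sin_pi_div_two] at h2
  rw [cos_zero, sin_zero] at h1
  simp [ha] at h1 h2
  exact ⟨h1, h2⟩

theorem zero_of_deriv {φ : ℝ → ℝ} {a : ℝ} {t : ℝ} (h : ∀ x, φ x = 0) (hd : HasDerivAt φ a t) :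
    a = 0 := by
  have : φ = fun _ => 0 := funext h
  rw [this] at hd
  exact hd.unique (hasDerivAt_const t 0)

theorem Sys.case4C (h : Sys K H R Q R1 R2 R3 S S1 S2 S3 g g' g'' g2 p0)
    (hA1 : K.A1 = 0) (hA2 : K.A2 = 0) (hA3 : K.A3 = 0) (hA4 : K.A4 = 0)
    (hC : ¬ (K.C1 = 0 ∧ K.C2 = 0)) : Concl K R := by
  have f0 : ∀ t, K.f t = 0 := by intro t; simp only [Cst.f, hA1, hA2, hA3, hA4]; ring
  have f1 : ∀ t, K.f1 t = 0 := by intro t; simp only [Cst.f1, hA1, hA2, hA3, hA4]; ring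
  have f2 : ∀ t, K.f2 t = 0 := by intro t; simp only [Cst.f2, hA1, hA2, hA3, hA4]; ring
  have fk : ∀ t, K.k t = 0 := by intro t; simp only [Cst.k, hA1, hA2, hA3, hA4]; ring
  have hp : InP fun r => r ^ 2 * R1 r := by
    by_cases h1 : K.C1 = 0
    · have := h.sep.2.2.2.1
      exact InP.of_mul (fun h2 => hC ⟨h1, h2⟩)
        (this.lin 1 0 this (fun r hr => by rw [hA4]; ring))
    · have := h.sep.2.2.1
      exact InP.of_mul h1 (this.lin 1 0 this (fun r hr => by rw [hA3]; ring))
  obtain ⟨c0, a1, a2, a3, a4, hR⟩ := h.solveC hp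
  have Lc := h.Lcoef (a := 0) (c0 := c0) (a1 := a1) (a2 := a2) (a3 := a3) (a4 := a4)
    (fun r hr => by rw [hR r hr]; ring) hA1 hA2
  have l2 : ∀ t, 5 * K.b1 t * a3 + 4 * K.c t * a4 = 0 := by
    intro t
    have := (Lc t).2.2.1
    simp only [f0, f1, f2, fk] at this
    linarith
  obtain rfl : a4 = 0 := by
    refine K.c_zero (fun t => ?_) hC
    have e1 := l2 t
    have e2 := l2 (t + π)
    have e3 : K.c (t + π) = -K.c t := by simp only [Cst.c, cos_add_pi, sin_add_pi]; ring
    have e4 : K.b1 (t + π) = K.b1 t := by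
      simp only [Cst.b1]
      rw [show 2 * (t + π) = 2 * t + 2 * π by ring, cos_add_two_pi, sin_add_two_pi]
    rw [e3, e4] at e2
    linarith
  obtain rfl : a3 = 0 := by
    by_cases hB : K.B1 = 0 ∧ K.B2 = 0
    · have b1 : ∀ t, K.b1 t = 0 := by intro t; simp only [Cst.b1, hB.1, hB.2]; ring
      have b0 : ∀ t, K.b t = K.B0 := by intro t; simp only [Cst.b, hB.1, hB.2]; ring
      by_contra h3
      have s1 : ∀ t, K.B0 * S1 t = 0 := by
        intro t
        have := (h.Ncoef (a := 0) (c0 := c0) (a1 := a1) (a2 := a2) (a3 := a3)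
          (fun r hr => by rw [hR r hr]; ring) hA1 hA2 hA3 hA4 t).1
        rw [b1, b0] at this
        have : a3 * (K.B0 * S1 t) = 0 := by linarith
        simpa only [mul_eq_zero, h3, false_or] using this
      have s2 : ∀ t, K.B0 * S2 t = 0 := fun t => zero_of_deriv s1 ((h.hS1 t).const_mul _)
      have s3 : ∀ t, K.B0 * S3 t = 0 := fun t => zero_of_deriv s2 ((h.hS2 t).const_mul _)
      refine h3 (K.c_zero (fun t => ?_) hC)
      have := (Lc t).2.2.2.1
      rw [f0, b1, b0] at this
      linarith [s3 t, s1 t]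
    · exact K.b1_zero (fun t => by linarith [l2 t]) hB
  exact Concl.simple c0 a1 a2 (fun r hr => by rw [hR r hr]; ring)

theorem Sys.case4B (h : Sys K H R Q R1 R2 R3 S S1 S2 S3 g g' g'' g2 p0)
    (hA1 : K.A1 = 0) (hA2 : K.A2 = 0) (hA3 : K.A3 = 0) (hA4 : K.A4 = 0)
    (hB : ¬ (K.B1 = 0 ∧ K.B2 = 0)) (hC1 : K.C1 = 0) (hC2 : K.C2 = 0) : Concl K R := by
  have f0 : ∀ t, K.f t = 0 := by intro t; simp only [Cst.f, hA1, hA2, hA3, hA4]; ring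
  have f1 : ∀ t, K.f1 t = 0 := by intro t; simp only [Cst.f1, hA1, hA2, hA3, hA4]; ring
  have f2 : ∀ t, K.f2 t = 0 := by intro t; simp only [Cst.f2, hA1, hA2, hA3, hA4]; ring
  have fk : ∀ t, K.k t = 0 := by intro t; simp only [Cst.k, hA1, hA2, hA3, hA4]; ring
  have c0' : ∀ t, K.c t = 0 := by intro t; simp only [Cst.c, hC1, hC2]; ring
  have c1' : ∀ t, K.c1 t = 0 := by intro t; simp only [Cst.c1, hC1, hC2]; ring
  obtain ⟨a, c0, a1, a2, a3, hR⟩ := h.solve2 (h.inP2 hB)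
  have Lc := h.Lcoef (a := a) (c0 := c0) (a1 := a1) (a2 := a2) (a3 := a3) (a4 := 0)
    (fun r hr => by rw [hR r hr]; ring) hA1 hA2
  obtain rfl : a3 = 0 := by
    refine K.b1_zero (fun t => ?_) hB
    have := (Lc t).2.2.1
    simp only [f0, f1, f2, fk, c0'] at this
    linarith
  refine ⟨a1, a, c0, a2, fun r hr => by rw [hR r hr]; ring, ?_, fun _ => ⟨hC1, hC2⟩⟩
  by_cases ha : a = 0
  · rw [ha, mul_zero]
  have g0 : ∀ t, g t = 0 := by
    intro t
    have := (h.Ncoef hR hA1 hA2 hA3 hA4 t).2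
    rw [c0'] at this
    have : a * g t = 0 := by linarith
    simpa only [mul_eq_zero, ha, false_or] using this
  have g1 : ∀ t, g' t = 0 := fun t => zero_of_deriv g0 (h.hg t)
  have gg : ∀ t, g'' t = 0 := fun t => zero_of_deriv g1 (h.hg' t)
  have : a1 = 0 := by
    refine K.b1_zero (fun t => ?_) hB
    have := (Lc t).2.2.2.2
    rw [c0', c1', gg, g0] at this
    linarith
  rw [this, zero_mul]
end

section
variable {K : Cst} {H : ℝ} {R Q R1 R2 R3 S S1 S2 S3 g g' g'' g2 p0 : ℝ → ℝ}

theorem Cst.exists_max (K : Cst) (hA1 : K.A1 = 0) (hA2 : K.A2 = 0)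
    (hA : ¬ (K.A3 = 0 ∧ K.A4 = 0)) :
    ∃ t, K.f1 t = 0 ∧ K.f t ≠ 0 ∧ ∀ x, K.f x ^ 2 + K.f1 x ^ 2 ≠ 0 := by
  have hn : ∀ x, K.f x ^ 2 + K.f1 x ^ 2 ≠ 0 := by
    intro x
    have e : K.f x ^ 2 + K.f1 x ^ 2 = K.A3 ^ 2 + K.A4 ^ 2 := by
      simp only [Cst.f, Cst.f1, hA1, hA2]
      linear_combination (K.A3 ^ 2 + K.A4 ^ 2) * sin_sq_add_cos_sq x
    rw [e]
    intro h0
    apply hA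
    constructor <;> nlinarith [sq_nonneg K.A3, sq_nonneg K.A4]
  have h1 := Complex.norm_mul_cos_arg (⟨K.A3, K.A4⟩ : ℂ)
  have h2 := Complex.norm_mul_sin_arg (⟨K.A3, K.A4⟩ : ℂ)
  simp only at h1 h2
  set t := Complex.arg (⟨K.A3, K.A4⟩ : ℂ)
  have hf1 : K.f1 t = 0 := by
    simp only [Cst.f1, hA1, hA2]
    linear_combination sin t * h1 - cos t * h2
  refine ⟨t, hf1, ?_, hn⟩
  intro hf
  exact hn t (by rw [hf, hf1]; ring)

theorem Sys.case3pos (h : Sys K H R Q R1 R2 R3 S S1 S2 S3 g g' g'' g2 p0) {l t κ c0 a2 : ℝ}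
    (hl : 0 < l) (ht1 : K.f1 t = 0) (ht : K.f t ≠ 0) (ht2 : K.f2 t = -K.f t) (hb : K.b t = K.B0)
    (hb1 : K.b1 t = 0) (hc : K.c t = l ^ 2 * K.f t)
    (hR : ∀ r, 0 < r → R r = c0 + a2 / r ^ 2 + κ / √(1 + l ^ 2 * r ^ 2)) : κ = 0 := by
  have hpos : ∀ r : ℝ, 0 < 1 + l ^ 2 * r ^ 2 := fun r => by positivity
  have hs : ∀ r : ℝ, 0 < √(1 + l ^ 2 * r ^ 2) := fun r => Real.sqrt_pos.2 (hpos r)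
  have hs2 : ∀ r : ℝ, √(1 + l ^ 2 * r ^ 2) ^ 2 = 1 + l ^ 2 * r ^ 2 :=
    fun r => Real.sq_sqrt (hpos r).le
  have hds : ∀ r : ℝ, HasDerivAt (fun r => √(1 + l ^ 2 * r ^ 2))
      (l ^ 2 * r / √(1 + l ^ 2 * r ^ 2)) r := by
    intro r
    have hu : HasDerivAt (fun r : ℝ => 1 + l ^ 2 * r ^ 2) (2 * l ^ 2 * r) r := by
      refine (((hasDerivAt_pow 2 r).const_mul (l ^ 2)).const_add 1).congr_deriv ?_
      push_cast; ring
    refine (hu.sqrt (hpos r).ne').congr_deriv ?_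
    have := hs r
    field_simp
  have Ps : ∀ (n : ℕ) (r : ℝ), HasDerivAt (fun r => 1 / √(1 + l ^ 2 * r ^ 2) ^ n)
      (-(n : ℝ) / √(1 + l ^ 2 * r ^ 2) ^ (n + 1) * (l ^ 2 * r / √(1 + l ^ 2 * r ^ 2))) r :=
    fun n r => HasDerivAt.comp (h₂ := fun x : ℝ => 1 / x ^ n) r
      (hasDerivAt_inv_pow n _ (hs r)) (hds r)
  have P := hasDerivAt_inv_pow
  have e1 : ∀ r, 0 < r → R1 r = -κ * l ^ 2 * r / √(1 + l ^ 2 * r ^ 2) ^ 3 - 2 * a2 / r ^ 3 := by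
    intro r h0
    refine deriv_unique h0 hR (h.hR r h0) ?_
    have hd := ((hasDerivAt_const r c0).add ((P 2 r h0).const_mul a2)).add
      ((Ps 1 r).const_mul κ)
    refine (hd.congr_deriv (f' := _) ?_).congr_of_eventuallyEq (Filter.Eventually.of_forall ?_)
    · have := hs r
      push_cast; field_simp; ring
    · intro x; simp only [Pi.add_apply]; ring
  have e2 : ∀ r, 0 < r → R2 r = κ * (-l ^ 2 / √(1 + l ^ 2 * r ^ 2) ^ 3
      + 3 * l ^ 4 * r ^ 2 / √(1 + l ^ 2 * r ^ 2) ^ 5) + 6 * a2 / r ^ 4 := by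
    intro r h0
    refine deriv_unique h0 e1 (h.hR1 r h0) ?_
    have hd := (((hasDerivAt_pow 1 r).const_mul (-κ * l ^ 2)).mul (Ps 3 r)).sub
      ((P 3 r h0).const_mul (2 * a2))
    refine (hd.congr_deriv (f' := _) ?_).congr_of_eventuallyEq (Filter.Eventually.of_forall ?_)
    · have := hs r
      push_cast; field_simp; ring
    · intro x; simp only [Pi.mul_apply, Pi.sub_apply]; ring
  have e3 : ∀ r, 0 < r → R3 r = κ * (9 * l ^ 4 * r - 6 * l ^ 6 * r ^ 3)
      / √(1 + l ^ 2 * r ^ 2) ^ 7 - 24 * a2 / r ^ 5 := by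
    intro r h0
    refine deriv_unique h0 e2 (h.hR2 r h0) ?_
    have hd := (((Ps 3 r).const_mul (-κ * l ^ 2)).add
      (((hasDerivAt_pow 2 r).const_mul (3 * κ * l ^ 4)).mul (Ps 5 r))).add
      ((P 4 r h0).const_mul (6 * a2))
    refine (hd.congr_deriv (f' := _) ?_).congr_of_eventuallyEq (Filter.Eventually.of_forall ?_)
    · have h1 := hs r
      have h2 := hs2 r
      push_cast
      generalize √(1 + l ^ 2 * r ^ 2) = s at *
      have : κ * (9 * l ^ 4 * r - 6 * l ^ 6 * r ^ 3) / s ^ 7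
        = κ * (9 * l ^ 4 * r * s ^ 2 - 15 * l ^ 6 * r ^ 3) / s ^ 7 := by rw [h2]; ring
      rw [this]
      field_simp; ring
    · intro x; simp only [Pi.mul_apply, Pi.add_apply]; ring
  obtain ⟨n2, n3, n4, n5, -, hn⟩ := h.Nab t
  have key := alg_lemma l (-3 * K.f t * κ ^ 2 * l ^ 2)
    (-3 * K.f t * c0 * κ * l ^ 2 - g t * κ * l ^ 2 - 2 * H * K.f t * κ * l ^ 4)
    (K.B0 * S1 t * κ * l ^ 2)
    (-3 * K.f t * a2 * κ * l ^ 2 - 3 * K.f t * S t * κ * l ^ 2 - H * K.f t * κ * l ^ 2)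
    (H * K.f t * κ * l ^ 2) (2 * K.B0 * S1 t * κ) (-6 * K.f t * a2 * κ - 6 * K.f t * S t * κ)
    (n2 + 2 * K.B0 * S1 t * c0)
    (n3 - 6 * K.f t * c0 * a2 - 2 * a2 * g t - 6 * K.f t * S t * c0 - 4 * H * K.f t * a2 * l ^ 2)
    (n4 + 4 * K.B0 * S1 t * a2)
    (n5 - 6 * K.f t * a2 ^ 2 - 12 * K.f t * S t * a2 + 16 * H * K.f t * a2)
    (-H * K.f t * κ) hl (by
      intro r s hr hs0 hss
      have es : √(1 + l ^ 2 * r ^ 2) = s := by rw [← hss, Real.sqrt_sq hs0.le]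
      refine Eq.trans ?_ (hn r hr)
      have eR : ((K.f2 t + 3 * K.f t) / 2 / r + K.b1 t + K.c t * r) * R2 r
          = K.f t * (κ * (-l ^ 2 / (r * s) + 3 * l ^ 4 * r / s ^ 3)) + 6 * K.f t * a2 / r ^ 5
            + 6 * K.f t * a2 * l ^ 2 / r ^ 3 := by
        have ea : (K.f2 t + 3 * K.f t) / 2 / r + K.b1 t + K.c t * r = K.f t * s ^ 2 / r := by
          rw [ht2, hb1, hc, hss]; field_simp; ring
        rw [e2 r hr, es, mul_add]
        have eb : ((K.f2 t + 3 * K.f t) / 2 / r + K.b1 t + K.c t * r) * (6 * a2 / r ^ 4)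
            = 6 * K.f t * a2 / r ^ 5 + 6 * K.f t * a2 * l ^ 2 / r ^ 3 := by
          rw [ht2, hb1, hc]; field_simp; ring
        rw [eb, ea]; field_simp; ring
      rw [eR, e1 r hr, e3 r hr, hR r hr, es, ht1, ht2, hb, hb1, hc]
      field_simp
      ring)
  have : -3 * K.f t * l ^ 2 * κ ^ 2 = 0 := by linarith
  have h2 : -3 * K.f t * l ^ 2 ≠ 0 := by
    have := hl.ne'
    positivity
  simpa [h2] using (mul_eq_zero.1 this).resolve_left h2

theorem Sys.case3c (h : Sys K H R Q R1 R2 R3 S S1 S2 S3 g g' g'' g2 p0)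
    (hA1 : K.A1 = 0) (hA2 : K.A2 = 0) (hA : ¬ (K.A3 = 0 ∧ K.A4 = 0))
    (hB1 : K.B1 = 0) (hB2 : K.B2 = 0) {l : ℝ} (hC1 : K.C1 = l * K.A3) (hC2 : K.C2 = l * K.A4) :
    Concl K R := by
  have f2 : ∀ t, K.f2 t = -K.f t := by intro t; simp only [Cst.f, Cst.f2, hA1, hA2]; ring
  have fk : ∀ t, K.k t = K.f1 t := by intro t; simp only [Cst.k, Cst.f1, hA1, hA2]; ring
  have fc : ∀ t, K.c t = l * K.f t := by
    intro t; simp only [Cst.c, Cst.f, hA1, hA2, hC1, hC2]; ring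
  have fc1 : ∀ t, K.c1 t = l * K.f1 t := by
    intro t; simp only [Cst.c1, Cst.f1, hA1, hA2, hC1, hC2]; ring
  have fb : ∀ t, K.b t = K.B0 := by intro t; simp only [Cst.b, hB1, hB2]; ring
  have fb1 : ∀ t, K.b1 t = 0 := by intro t; simp only [Cst.b1, hB1, hB2]; ring
  have hf1 : ∀ t, HasDerivAt K.f1 (-K.f t) t := fun t => (K.hf1 t).congr_deriv (f2 t)
  obtain ⟨t0, ht1, ht, hnn⟩ := K.exists_max hA1 hA2 hA
  have hL : ∀ t r, 0 < r → K.f t * ((1 + l * r ^ 2) * R1 r - R r / r - Q r) = p0 t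
      + (g'' t + g t - 2 * (l * K.f t) * S2 t - 5 * (l * K.f1 t) * S1 t
        + 2 * (l * K.f t) * S t) / r
      + (-(1 / 2) * (K.B0 * S3 t + 4 * K.B0 * S1 t)) / r ^ 2
      + (-(1 / 6) * (K.f1 t * S3 t - 4 * K.f t * S2 t + 4 * K.f1 t * S1 t - 16 * K.f t * S t))
        / r ^ 3 := by
    intro t r hr
    have := h.L r hr t
    rw [f2, fk, fc, fc1, fb, fb1] at this
    linear_combination this
  obtain ⟨q0, q1, q2, q3, hE⟩ : InP fun r => (1 + l * r ^ 2) * R1 r - R r / r - Q r :=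
    InP.of_mul ht ⟨_, _, _, _, hL t0⟩
  have hcoef : ∀ t,
      (g'' t + g t - 2 * (l * K.f t) * S2 t - 5 * (l * K.f1 t) * S1 t + 2 * (l * K.f t) * S t
        = K.f t * q1) ∧
      (-(1 / 2) * (K.B0 * S3 t + 4 * K.B0 * S1 t) = K.f t * q2) ∧
      (-(1 / 6) * (K.f1 t * S3 t - 4 * K.f t * S2 t + 4 * K.f1 t * S1 t - 16 * K.f t * S t)
        = K.f t * q3) := by
    intro t
    have hLt := hL t
    generalize g'' t + g t - 2 * (l * K.f t) * S2 t - 5 * (l * K.f1 t) * S1 t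
      + 2 * (l * K.f t) * S t = P1 at *
    generalize -(1 / 2) * (K.B0 * S3 t + 4 * K.B0 * S1 t) = P2 at *
    generalize -(1 / 6) * (K.f1 t * S3 t - 4 * K.f t * S2 t + 4 * K.f1 t * S1 t
      - 16 * K.f t * S t) = P3 at *
    have key := polyz [P3 - K.f t * q3, P2 - K.f t * q2, P1 - K.f t * q1, p0 t - K.f t * q0] (by
      intro r hr
      have e := hLt r hr
      have e1 : (1 + l * r ^ 2) * R1 r - R r / r - Q r = _ := hE r hr
      rw [e1] at e
      refine Eq.trans ?_ (mul_eq_zero_of_right (r ^ 3) (sub_eq_zero.2 e.symm))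
      simp only [List.foldr_cons, List.foldr_nil]
      field_simp
      ring)
    simp only [List.forall_mem_cons] at key
    obtain ⟨k0, k1, k2, -⟩ := key
    exact ⟨sub_eq_zero.1 k2, sub_eq_zero.1 k1, sub_eq_zero.1 k0⟩
  have s2 := theta_part (q3 := q3) hf1 hnn ht1 h.hS h.hS2
    (fun t => by linarith [(hcoef t).2.2])
  have s3 : ∀ t, S3 t = -4 * S1 t := by
    intro t
    refine (h.hS2 t).unique ?_
    have e : S2 = fun t => 3 * q3 / 2 - 4 * S t := funext s2
    rw [e]
    exact (((h.hS t).const_mul 4).const_sub _).congr_deriv (by ring)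
  obtain rfl : q2 = 0 := by
    have := (hcoef t0).2.1
    rw [s3] at this
    have : K.f t0 * q2 = 0 := by linarith
    simpa [ht] using this
  have gp := g_part (q1 := q1) (q3 := q3) (l := l) K.hf hf1 h.hS h.hS1 h.hg h.hg' s2
    (fun t => (hcoef t).1)
  by_cases hμ : q1 - 3 / 4 * l * q3 = 0
  · have ode : ∀ r, 0 < r → (1 + l * r ^ 2) * R2 r
        = (1 / r - 2 * l * r) * R1 r - 3 / 4 * l * q3 / r ^ 2 - 3 * q3 / r ^ 4 := by
      intro r hr
      have d1 := ((((((hasDerivAt_pow 2 r).const_mul l).const_add 1).mul (h.hR1 r hr)).sub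
        ((h.hR r hr).mul (hasDerivAt_inv_pow 1 r hr))).sub (h.hQ r hr))
      have d2 := (((hasDerivAt_inv_pow 1 r hr).const_mul q1).add
        ((hasDerivAt_inv_pow 3 r hr).const_mul q3)).const_add q0
      have e := deriv_unique hr (fun x hx => by
        simp only [Pi.sub_apply, Pi.mul_apply, Pi.add_apply]
        have := hE x hx
        simp only at this
        linear_combination this) d1 d2
      have hq1 : q1 = 3 / 4 * l * q3 := by linarith
      rw [hq1] at e
      push_cast at e
      refine sub_eq_zero.1 (Eq.trans ?_ (sub_eq_zero.2 e))
      field_simp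
      ring
    rcases radial_part h.hR h.hR1 ode with ⟨c0, hR⟩ | ⟨hl, a, c0, hR⟩ | ⟨hl, κ, c0, hR⟩
    · exact Concl.simple c0 0 (-3 / 8 * q3) (fun r hr => by rw [hR r hr]; ring)
    · obtain ⟨-, rfl⟩ := h.quadKill (d := 0) (a := a) (c0 := c0) (a1 := 0) (a2 := -3 / 8 * q3)
        (fun r hr => by rw [hR r hr]; ring) ht
      exact Concl.simple c0 0 (-3 / 8 * q3) (fun r hr => by rw [hR r hr]; ring)
    · have hs2 : √l ^ 2 = l := Real.sq_sqrt hl.le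
      obtain rfl := h.case3pos (l := √l) (κ := κ) (c0 := c0) (a2 := -3 / 8 * q3)
        (Real.sqrt_pos.2 hl) ht1 ht (f2 t0) (fb t0) (fb1 t0) (by rw [fc, hs2])
        (fun r hr => by rw [hR r hr, hs2]; ring)
      exact Concl.simple c0 0 (-3 / 8 * q3) (fun r hr => by rw [hR r hr]; ring)
  · obtain ⟨t, htt⟩ : ∃ t, K.f1 t ≠ 0 := by
      by_contra! hc
      exact ht (neg_eq_zero.1 (zero_of_deriv hc (hf1 t0)))
    obtain ⟨pS, pS1, pg⟩ := gp t
    obtain ⟨pf, pf1⟩ := harm_periodic 1 (by norm_num) (y := K.f) (z := K.f1) K.hf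
      (fun t => (hf1 t).congr_deriv (by push_cast; ring)) t
    have hD : g (t + 2 * π) - g t ≠ 0 := by
      rw [pg]
      exact mul_ne_zero (mul_ne_zero (neg_ne_zero.2 hμ) Real.pi_ne_zero) htt
    have hN : ∀ r, 0 < r → (g (t + 2 * π) - g t) * R1 r
        + (S1 t * (g2 (t + 2 * π) - g2 t)) / r ^ 2
        + (-2 * S t * (g (t + 2 * π) - g t) + S1 t * (g' (t + 2 * π) - g' t)) / r ^ 3 = 0 := by
      intro r hr
      have n1 := h.N r hr t
      have n2 := h.N r hr (t + 2 * π)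
      simp only [f2, fk, fc, fc1, fb, fb1, s3, s2, pS, pS1, pf, pf1] at n1 n2
      linear_combination n2 - n1
    generalize g (t + 2 * π) - g t = D at *
    generalize S1 t * (g2 (t + 2 * π) - g2 t) = u at *
    generalize -2 * S t * D + S1 t * (g' (t + 2 * π) - g' t) = v at *
    obtain ⟨c0, hc⟩ := const_of_deriv (φ := fun r => R r - u / D * (1 / r ^ 1)
        - v / D / 2 * (1 / r ^ 2)) (by
      intro r hr
      refine (((h.hR r hr).sub ((hasDerivAt_inv_pow 1 r hr).const_mul (u / D))).sub
        ((hasDerivAt_inv_pow 2 r hr).const_mul (v / D / 2))).congr_deriv ?_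
      refine Eq.trans ?_ (mul_eq_zero_of_right (1 / D) (hN r hr))
      push_cast; field_simp; ring)
    exact Concl.simple c0 (u / D) (v / D / 2) (fun r hr => by rw [← hc r hr]; ring)

/-- The classification for the reduced system. -/
theorem Sys.main (h : Sys K H R Q R1 R2 R3 S S1 S2 S3 g g' g'' g2 p0) :
    (K.A1 = 0 ∧ K.A2 = 0 ∧ K.A3 = 0 ∧ K.A4 = 0 ∧ K.B1 = 0 ∧ K.B2 = 0 ∧ K.C1 = 0 ∧ K.C2 = 0) ∨
    Concl K R := by
  by_cases hA12 : K.A1 = 0 ∧ K.A2 = 0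
  swap
  · exact Or.inr (h.case2 hA12)
  obtain ⟨hA1, hA2⟩ := hA12
  by_cases hA : K.A3 = 0 ∧ K.A4 = 0
  · obtain ⟨hA3, hA4⟩ := hA
    by_cases hC : K.C1 = 0 ∧ K.C2 = 0
    · by_cases hB : K.B1 = 0 ∧ K.B2 = 0
      · exact Or.inl ⟨hA1, hA2, hA3, hA4, hB.1, hB.2, hC.1, hC.2⟩
      · exact Or.inr (h.case4B hA1 hA2 hA3 hA4 hB hC.1 hC.2)
    · exact Or.inr (h.case4C hA1 hA2 hA3 hA4 hC)
  · right
    by_cases hB : K.B1 = 0 ∧ K.B2 = 0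
    · by_cases hd : K.A3 * K.C2 - K.A4 * K.C1 = 0
      · by_cases h3 : K.A3 = 0
        · have h4 : K.A4 ≠ 0 := fun h4 => hA ⟨h3, h4⟩
          refine h.case3c hA1 hA2 hA hB.1 hB.2 (l := K.C2 / K.A4) ?_ ?_
          · rw [h3] at hd ⊢
            have : K.A4 * K.C1 = 0 := by linarith
            rw [(mul_eq_zero.1 this).resolve_left h4]; ring
          · field_simp
        · refine h.case3c hA1 hA2 hA hB.1 hB.2 (l := K.C1 / K.A3) ?_ ?_
          · field_simp
          · field_simp; linarith
      · exact h.case3b hA1 hA2 hd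
    · exact h.case3a hA1 hA2 hA hB
end

/-- For a potential `V(r,θ) = R(r) + S(θ)/r²` separating in polar coordinates,
if the determining equations (E1)–(E4) for a third order integral of motion
hold for all `r > 0` and all `θ`, then either all the leading constants
`A₁, A₂, A₃, A₄, B₁, B₂, C₁, C₂` vanish (and `R` is unrestricted), or, up to
terms `c₀ + c₂/r²` that can be absorbed into the angular part, `R(r) = a₃/r`
(Coulomb), `R(r) = a₄r²` (harmonic, requiring `C₁ = C₂ = 0`), or `R = 0`. -/
theorem radial_part_classification
    (ℏ A₁ A₂ A₃ A₄ B₀ B₁ B₂ C₁ C₂ D₀ : ℝ) (R S : ℝ → ℝ) (G₁ G₂ : ℝ → ℝ → ℝ)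
    (hR : ContDiffOn ℝ (⊤ : ℕ∞) R (Set.Ioi 0)) (hS : ContDiff ℝ (⊤ : ℕ∞) S)
    (hG₁ : ContDiffOn ℝ (⊤ : ℕ∞) (Function.uncurry G₁) (Set.Ioi 0 ×ˢ Set.univ))
    (hG₂ : ContDiffOn ℝ (⊤ : ℕ∞) (Function.uncurry G₂) (Set.Ioi 0 ×ˢ Set.univ))
    -- (E1), with the partial derivatives of `V(r,θ) = R(r) + S(θ)/r²`
    -- written out in terms of the derivatives of `R` and `S`:
    -- `V_r = R′ − 2S/r³`, `V_θ = S′/r²`, `V_rr = R″ + 6S/r⁴`, `V_rθ = −2S′/r³`,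
    -- `V_θθ = S″/r²`, `V_rrr = R⁽³⁾ − 24S/r⁵`, `V_rrθ = 6S′/r⁴`,
    -- `V_rθθ = −2S″/r³`, `V_θθθ = S⁽³⁾/r²`.
    (hE1 : ∀ r ∈ Set.Ioi (0 : ℝ), ∀ θ : ℝ,
      G₁ r θ * (deriv R r - 2 * S θ / r ^ 3) + G₂ r θ * (deriv S θ / r ^ 2)
        = ℏ ^ 2 / 4 *
          (F₁ A₁ A₂ A₃ A₄ θ * (iteratedDeriv 3 R r - 24 * S θ / r ^ 5)
            + F₂ A₁ A₂ A₃ A₄ B₀ B₁ B₂ r θ * (6 * deriv S θ / r ^ 4)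
            + F₃ A₁ A₂ A₃ A₄ B₁ B₂ C₁ C₂ r θ * (-2 * iteratedDeriv 2 S θ / r ^ 3)
            + F₄ A₁ A₂ A₃ A₄ B₀ B₁ B₂ C₁ C₂ D₀ r θ * (iteratedDeriv 3 S θ / r ^ 2)
            + r * F₃ A₁ A₂ A₃ A₄ B₁ B₂ C₁ C₂ r θ * (iteratedDeriv 2 R r + 6 * S θ / r ^ 4)
            + (3 * r * F₄ A₁ A₂ A₃ A₄ B₀ B₁ B₂ C₁ C₂ D₀ r θ
                - (2 / r) * F₂ A₁ A₂ A₃ A₄ B₀ B₁ B₂ r θ) * (-2 * deriv S θ / r ^ 3)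
            - (2 / r) * F₃ A₁ A₂ A₃ A₄ B₁ B₂ C₁ C₂ r θ * (iteratedDeriv 2 S θ / r ^ 2)
            + (-F₃ A₁ A₂ A₃ A₄ B₁ B₂ C₁ C₂ r θ + 2 * C₁ * cos θ + 2 * C₂ * sin θ)
                * (deriv R r - 2 * S θ / r ^ 3)
            + (-2 * F₄ A₁ A₂ A₃ A₄ B₀ B₁ B₂ C₁ C₂ D₀ r θ
                + (2 / r ^ 2) * F₂ A₁ A₂ A₃ A₄ B₀ B₁ B₂ r θ + 8 * D₀
                + (-2 * C₁ * sin θ + 2 * C₂ * cos θ) / r) * (deriv S θ / r ^ 2)))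
    -- (E2)
    (hE2 : ∀ r ∈ Set.Ioi (0 : ℝ), ∀ θ : ℝ,
      deriv (fun r' => G₁ r' θ) r
        = 3 * F₁ A₁ A₂ A₃ A₄ θ * (deriv R r - 2 * S θ / r ^ 3)
          + F₂ A₁ A₂ A₃ A₄ B₀ B₁ B₂ r θ * (deriv S θ / r ^ 2))
    -- (E3)
    (hE3 : ∀ r ∈ Set.Ioi (0 : ℝ), ∀ θ : ℝ,
      (1 / r ^ 2) * deriv (fun θ' => G₂ r θ') θ
        = F₃ A₁ A₂ A₃ A₄ B₁ B₂ C₁ C₂ r θ * (deriv R r - 2 * S θ / r ^ 3)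
          + 3 * F₄ A₁ A₂ A₃ A₄ B₀ B₁ B₂ C₁ C₂ D₀ r θ * (deriv S θ / r ^ 2)
          - G₁ r θ / r ^ 3)
    -- (E4)
    (hE4 : ∀ r ∈ Set.Ioi (0 : ℝ), ∀ θ : ℝ,
      deriv (fun r' => G₂ r' θ) r
        = 2 * (F₂ A₁ A₂ A₃ A₄ B₀ B₁ B₂ r θ * (deriv R r - 2 * S θ / r ^ 3)
            + F₃ A₁ A₂ A₃ A₄ B₁ B₂ C₁ C₂ r θ * (deriv S θ / r ^ 2))
          - (1 / r ^ 2) * deriv (fun θ' => G₁ r θ') θ) :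
    (A₁ = 0 ∧ A₂ = 0 ∧ A₃ = 0 ∧ A₄ = 0 ∧ B₁ = 0 ∧ B₂ = 0 ∧ C₁ = 0 ∧ C₂ = 0) ∨
    (∃ a₃ a₄ c₀ c₂ : ℝ,
      (∀ r ∈ Set.Ioi (0 : ℝ), R r = a₃ / r + a₄ * r ^ 2 + c₀ + c₂ / r ^ 2) ∧
      a₃ * a₄ = 0 ∧
      (a₄ ≠ 0 → C₁ = 0 ∧ C₂ = 0)) := by

  obtain ⟨Q, R1, R2, R3, S1, S2, S3, g, g', g'', g2, p0, h⟩ :=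
    build_sys ⟨A₁, A₂, A₃, A₄, B₀, B₁, B₂, C₁, C₂, D₀⟩ ℏ R S G₁ G₂ hR hS hG₁ hG₂ hE1 hE2 hE3 hE4
  rcases h.main with h1 | ⟨a, b, c, d, h1, h2, h3⟩
  · exact Or.inl h1
  · exact Or.inr ⟨a, b, c, d, fun r hr => h1 r hr, h2, h3⟩
end

section
/- Let B₀, D₀ be real constants, let R : (0,∞) → ℝ be continuously differentiable, let S : ℝ → ℝ be three times continuously differentiable, and let G₁, G₂ : (0,∞) × ℝ → ℝ be continuously differentiable functions satisfying, for all r > 0 and θ ∈ ℝ: ∂_r G₁(r,θ) = B₀ S′(θ)/r²; (1/r²)∂_θ G₂(r,θ) = 3(B₀/r² + D₀)·S′(θ)/r² − G₁(r,θ)/r³; and ∂_r G₂(r,θ) = 2B₀(R′(r) − 2S(θ)/r³) − (1/r²)∂_θ G₁(r,θ). Then there exist twice continuously differentiable functions β, ξ : ℝ → ℝ such that G₁(r,θ) = −B₀S′(θ)/r + β(θ) and G₂(r,θ) = 2B₀(R(r) + S(θ)/r²) − B₀S″(θ)/(2r²) + β′(θ)/r + ξ(θ), and moreover β″(θ) +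 β(θ) = 0, ξ′(θ) = 3D₀S′(θ), and B₀(S⁽³⁾(θ) + 4S′(θ)) = 0 for all θ. -/
theorem aux_const (f : ℝ → ℝ) (hf : ∀ r ∈ Set.Ioi (0 : ℝ), HasDerivAt f 0 r) :
    ∀ r ∈ Set.Ioi (0 : ℝ), f r = f 1 := by
  intro r hr
  exact isOpen_Ioi.is_const_of_deriv_eq_zero isPreconnected_Ioi
    (fun x hx => (hf x hx).differentiableAt.differentiableWithinAt)
    (fun x hx => (hf x hx).deriv) hr (by simp)

theorem aux_theta (G : ℝ → ℝ → ℝ)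
    (hG : ContDiffOn ℝ 1 (Function.uncurry G) (Set.Ioi 0 ×ˢ Set.univ)) :
    ∀ r ∈ Set.Ioi (0 : ℝ), ContDiff ℝ 1 (fun θ => G r θ) := by
  intro r hr
  have h : ContDiff ℝ 1 (fun θ : ℝ => ((r, θ) : ℝ × ℝ)) := by fun_prop
  have := hG.comp (s := Set.univ) h.contDiffOn (fun x _ => ⟨hr, Set.mem_univ _⟩)
  exact contDiffOn_univ.1 this

theorem aux_r (G : ℝ → ℝ → ℝ)
    (hG : ContDiffOn ℝ 1 (Function.uncurry G) (Set.Ioi 0 ×ˢ Set.univ)) (θ : ℝ) :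
    ∀ r ∈ Set.Ioi (0 : ℝ), DifferentiableAt ℝ (fun r' => G r' θ) r := by
  intro r hr
  have h : ContDiff ℝ 1 (fun r : ℝ => ((r, θ) : ℝ × ℝ)) := by fun_prop
  have := hG.comp (s := Set.Ioi 0) h.contDiffOn (fun x hx => ⟨hx, Set.mem_univ _⟩)
  exact (this.differentiableOn (by norm_num)).differentiableAt (isOpen_Ioi.mem_nhds hr)


/-- Integration of the determining equations (E2)–(E4) in the case where all
leading constants `A₁,…,C₂` of the third order integral vanish (so `F₁ = F₃ = 0`,
`F₂ = B₀`, `F₄ = B₀/r² + D₀`): the functions `G₁, G₂` are determined up to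
functions `β(θ), ξ(θ)` satisfying `β″ + β = 0`, `ξ′ = 3D₀S′` and
`B₀(S⁽³⁾ + 4S′) = 0`. -/
theorem generic_case_integration (B₀ D₀ : ℝ) (R S : ℝ → ℝ) (G₁ G₂ : ℝ → ℝ → ℝ)
    (hR : ContDiffOn ℝ 1 R (Set.Ioi 0)) (hS : ContDiff ℝ 3 S)
    (hG₁ : ContDiffOn ℝ 1 (Function.uncurry G₁) (Set.Ioi 0 ×ˢ Set.univ))
    (hG₂ : ContDiffOn ℝ 1 (Function.uncurry G₂) (Set.Ioi 0 ×ˢ Set.univ))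
    (hE2 : ∀ r ∈ Set.Ioi (0 : ℝ), ∀ θ : ℝ,
      deriv (fun r' => G₁ r' θ) r = B₀ * deriv S θ / r ^ 2)
    (hE3 : ∀ r ∈ Set.Ioi (0 : ℝ), ∀ θ : ℝ,
      (1 / r ^ 2) * deriv (fun θ' => G₂ r θ') θ
        = 3 * (B₀ / r ^ 2 + D₀) * deriv S θ / r ^ 2 - G₁ r θ / r ^ 3)
    (hE4 : ∀ r ∈ Set.Ioi (0 : ℝ), ∀ θ : ℝ,
      deriv (fun r' => G₂ r' θ) r
        = 2 * B₀ * (deriv R r - 2 * S θ / r ^ 3)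
          - (1 / r ^ 2) * deriv (fun θ' => G₁ r θ') θ) :
    ∃ β ξ : ℝ → ℝ, ContDiff ℝ 2 β ∧ ContDiff ℝ 2 ξ ∧
      (∀ r ∈ Set.Ioi (0 : ℝ), ∀ θ : ℝ,
        G₁ r θ = -(B₀ * deriv S θ) / r + β θ ∧
        G₂ r θ = 2 * B₀ * (R r + S θ / r ^ 2) - B₀ * iteratedDeriv 2 S θ / (2 * r ^ 2)
          + deriv β θ / r + ξ θ) ∧
      (∀ θ : ℝ,
        iteratedDeriv 2 β θ + β θ = 0 ∧
        deriv ξ θ = 3 * D₀ * deriv S θ ∧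
        B₀ * (iteratedDeriv 3 S θ + 4 * deriv S θ) = 0) := by
  have hi2 : iteratedDeriv 2 S = deriv (deriv S) := by
    rw [iteratedDeriv_succ, iteratedDeriv_one]
  have hi3 : iteratedDeriv 3 S = deriv (deriv (deriv S)) := by
    rw [iteratedDeriv_succ, hi2]
  have hS1 : ContDiff ℝ 2 (deriv S) := by
    have : ContDiff ℝ (2 + 1) S := by simpa [show (2 : WithTop ℕ∞) + 1 = 3 by norm_num] using hS
    exact (contDiff_succ_iff_deriv.1 this).2.2
  have hS2 : ContDiff ℝ 1 (deriv (deriv S)) := by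
    have : ContDiff ℝ (1 + 1) (deriv S) := by
      simpa [show (1 : WithTop ℕ∞) + 1 = 2 by norm_num] using hS1
    exact (contDiff_succ_iff_deriv.1 this).2.2
  have dS : ∀ θ, HasDerivAt S (deriv S θ) θ := fun θ =>
    (hS.differentiable (by norm_num) θ).hasDerivAt
  have dS1 : ∀ θ, HasDerivAt (deriv S) (deriv (deriv S) θ) θ := fun θ =>
    (hS1.differentiable (by norm_num) θ).hasDerivAt
  have dS2 : ∀ θ, HasDerivAt (deriv (deriv S)) (deriv (deriv (deriv S)) θ) θ := fun θ =>
    (hS2.differentiable (by norm_num) θ).hasDerivAt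
  rw [hi2, hi3]
  have d1 : ∀ r ∈ Set.Ioi (0 : ℝ), ∀ c : ℝ,
      HasDerivAt (fun x : ℝ => c / x) (-c / r ^ 2) r := by
    intro r hr c
    have hr' : r ≠ 0 := ne_of_gt hr
    refine ((hasDerivAt_const r c).div (hasDerivAt_id r) hr').congr_deriv ?_
    simp
  have d2 : ∀ r ∈ Set.Ioi (0 : ℝ), ∀ c : ℝ,
      HasDerivAt (fun x : ℝ => c / x ^ 2) (-2 * c / r ^ 3) r := by
    intro r hr c
    have hr' : r ≠ 0 := ne_of_gt hr
    refine ((hasDerivAt_const r c).div (hasDerivAt_pow 2 r) (pow_ne_zero 2 hr')).congr_deriv ?_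
    norm_num
    field_simp
  obtain ⟨β, hβ⟩ : ∃ β : ℝ → ℝ, β = fun θ => G₁ 1 θ + B₀ * deriv S θ := ⟨_, rfl⟩
  have cβ : ContDiff ℝ 1 β := by
    rw [hβ]
    exact (aux_theta G₁ hG₁ 1 (by simp)).add (contDiff_const.mul (hS1.of_le (by norm_num)))
  have eG₁ : ∀ r ∈ Set.Ioi (0 : ℝ), ∀ θ : ℝ, G₁ r θ = -(B₀ * deriv S θ) / r + β θ := by
    intro r hr θ
    have := aux_const (fun r => G₁ r θ - (-(B₀ * deriv S θ)) / r) (by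
      intro r hr
      have h := (aux_r G₁ hG₁ θ r hr).hasDerivAt
      rw [hE2 r hr θ] at h
      refine (h.sub (d1 r hr (-(B₀ * deriv S θ)))).congr_deriv ?_
      ring) r hr
    simp only [hβ]
    simp only [div_one] at this
    linarith
  have dβ : ∀ θ, HasDerivAt β (deriv β θ) θ := fun θ =>
    (cβ.differentiable (by norm_num) θ).hasDerivAt
  have dG₁ : ∀ r ∈ Set.Ioi (0 : ℝ), ∀ θ : ℝ,
      deriv (fun θ' => G₁ r θ') θ = -(B₀ * deriv (deriv S) θ) / r + deriv β θ := by
    intro r hr θ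
    rw [show (fun θ' => G₁ r θ') = fun θ' => -(B₀ * deriv S θ') / r + β θ' from
      funext (eG₁ r hr)]
    exact ((((dS1 θ).const_mul B₀).neg.div_const r).add (dβ θ)).deriv
  obtain ⟨ξ, hξ⟩ : ∃ ξ : ℝ → ℝ, ξ = fun θ => G₂ 1 θ - (2 * B₀ * (R 1 + S θ)
    - B₀ * deriv (deriv S) θ / 2 + deriv β θ) := ⟨_, rfl⟩
  have eG₂ : ∀ r ∈ Set.Ioi (0 : ℝ), ∀ θ : ℝ,
      G₂ r θ = 2 * B₀ * (R r + S θ / r ^ 2) - B₀ * deriv (deriv S) θ / (2 * r ^ 2)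
          + deriv β θ / r + ξ θ := by
    intro r hr θ
    have := aux_const (fun r => G₂ r θ - (2 * B₀ * (R r + S θ / r ^ 2)
        - (B₀ * deriv (deriv S) θ / 2) / r ^ 2 + deriv β θ / r)) (by
      intro r hr
      have hr' : r ≠ 0 := ne_of_gt hr
      have h := (aux_r G₂ hG₂ θ r hr).hasDerivAt
      rw [hE4 r hr θ, dG₁ r hr θ] at h
      have hRr : HasDerivAt R (deriv R r) r :=
        ((hR.differentiableOn (by norm_num)).differentiableAt
          (isOpen_Ioi.mem_nhds hr)).hasDerivAt
      refine (h.sub ((((hRr.add (d2 r hr (S θ))).const_mul (2 * B₀)).sub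
        (d2 r hr (B₀ * deriv (deriv S) θ / 2))).add (d1 r hr (deriv β θ)))).congr_deriv ?_
      field_simp
      ring) r hr
    simp only [hξ]
    simp only [one_pow, div_one] at this
    rw [← div_div]
    linarith
  have cβ' : ContDiff ℝ 1 (deriv β) := by
    have e : deriv β = fun θ => 2 * (G₂ 1 θ - G₂ 2 θ - 2 * B₀ * (R 1 - R 2 + 3 / 4 * S θ)
        + 3 / 8 * B₀ * deriv (deriv S) θ) := by
      funext θ
      rw [eG₂ 1 (by simp) θ, eG₂ 2 (by simp) θ]
      ring
    have h1 := aux_theta G₂ hG₂ 1 (by simp)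
    have h2 := aux_theta G₂ hG₂ 2 (by simp)
    have h3 : ContDiff ℝ 1 S := hS.of_le (by norm_num)
    rw [e]
    fun_prop
  have cβ2 : ContDiff ℝ 2 β := by
    have : ContDiff ℝ (1 + 1) β := contDiff_succ_iff_deriv.2
      ⟨cβ.differentiable (by norm_num), by simp, cβ'⟩
    simpa [show (1 : WithTop ℕ∞) + 1 = 2 by norm_num] using this
  have cξ : ContDiff ℝ 1 ξ := by
    have h1 := aux_theta G₂ hG₂ 1 (by simp)
    have h3 : ContDiff ℝ 1 S := hS.of_le (by norm_num)
    rw [hξ]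
    fun_prop
  have dβ' : ∀ θ, HasDerivAt (deriv β) (deriv (deriv β) θ) θ := fun θ =>
    (cβ'.differentiable (by norm_num) θ).hasDerivAt
  have dξ : ∀ θ, HasDerivAt ξ (deriv ξ θ) θ := fun θ =>
    (cξ.differentiable (by norm_num) θ).hasDerivAt
  have key : ∀ r ∈ Set.Ioi (0 : ℝ), ∀ θ : ℝ,
      2 * B₀ * (deriv S θ / r ^ 2) - B₀ * deriv (deriv (deriv S)) θ / (2 * r ^ 2)
        + deriv (deriv β) θ / r + deriv ξ θ
      = 3 * (B₀ / r ^ 2 + D₀) * deriv S θ - (-(B₀ * deriv S θ) / r + β θ) / r := by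
    intro r hr θ
    have hr' : r ≠ 0 := ne_of_gt hr
    have h := hE3 r hr θ
    rw [eG₁ r hr θ, show (fun θ' => G₂ r θ') = _ from funext (eG₂ r hr)] at h
    have hd : deriv (fun θ => 2 * B₀ * (R r + S θ / r ^ 2)
        - B₀ * deriv (deriv S) θ / (2 * r ^ 2) + deriv β θ / r + ξ θ) θ = _ :=
      ((((((dS θ).div_const (r ^ 2)).const_add (R r)).const_mul (2 * B₀)).sub
        (((dS2 θ).const_mul B₀).div_const (2 * r ^ 2))).add
        ((dβ' θ).div_const r) |>.add (dξ θ)).deriv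
    rw [hd] at h
    have h2 := congrArg (fun x => r ^ 2 * x) h
    rw [← mul_assoc, mul_one_div_cancel (pow_ne_zero 2 hr'), one_mul] at h2
    rw [h2]
    field_simp
  have fin : ∀ θ : ℝ, deriv (deriv β) θ + β θ = 0 ∧ deriv ξ θ = 3 * D₀ * deriv S θ ∧
        B₀ * (deriv (deriv (deriv S)) θ + 4 * deriv S θ) = 0 := by
    intro θ
    have k1 := key 1 (by simp) θ
    have k2 := key (1 / 2) (by simp) θ
    have k3 := key (1 / 3) (by simp) θ
    ring_nf at k1 k2 k3
    refine ⟨?_, ?_, ?_⟩ <;> linarith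
  refine ⟨β, ξ, cβ2, ?_, fun r hr θ => ⟨eG₁ r hr θ, eG₂ r hr θ⟩, ?_⟩
  · have e : deriv ξ = fun θ => 3 * D₀ * deriv S θ := funext fun θ => (fin θ).2.1
    have : ContDiff ℝ (1 + 1) ξ := contDiff_succ_iff_deriv.2
      ⟨cξ.differentiable (by norm_num), by simp, by
        rw [e]
        exact contDiff_const.mul (hS1.of_le (by norm_num))⟩
    simpa [show (1 : WithTop ℕ∞) + 1 = 2 by norm_num] using this
  · intro θ
    rw [show iteratedDeriv 2 β = deriv (deriv β) by rw [iteratedDeriv_succ, iteratedDeriv_one]]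
    exact fin θ
end

section
/- Let ℏ ≠ 0 and ξ₀ be real constants, let I ⊆ ℝ be an open interval, and let S : I → ℝ be three times continuously differentiable with ℏ²S⁽³⁾(θ) = 12S(θ)S′(θ) + 4ξ₀S′(θ) for all θ ∈ I. Then there exist real constants b and c such that ℏ²(S′(θ))² = 4S(θ)³ + 4ξ₀S(θ)² + bS(θ) + c for all θ ∈ I; consequently, setting T(θ) = S(θ) + ξ₀/3, there exist real constants t₂ and t₃ such that ℏ²(T′(θ))² = 4T(θ)³ − t₂T(θ) − t₃ for all θ ∈ I. -/
/-- Integration of the determining equation `ℏ²S⁽³⁾ = 12SS′ + 4ξ₀S′` on an open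
interval: the angular part satisfies the (shifted) Weierstrass differential
equation `ℏ²(T′)² = 4T³ − t₂T − t₃` with `T = S + ξ₀/3`. -/
theorem angular_weierstrass (hbar ξ₀ : ℝ) (hh : hbar ≠ 0)
    (I : Set ℝ) (hIopen : IsOpen I) (hIconn : I.OrdConnected)
    (S : ℝ → ℝ) (hS : ContDiffOn ℝ 3 S I)
    (hode : ∀ θ ∈ I,
      hbar ^ 2 * iteratedDeriv 3 S θ = 12 * S θ * deriv S θ + 4 * ξ₀ * deriv S θ) :
    (∃ b c : ℝ, ∀ θ ∈ I,
        hbar ^ 2 * (deriv S θ) ^ 2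
          = 4 * (S θ) ^ 3 + 4 * ξ₀ * (S θ) ^ 2 + b * S θ + c) ∧
    (∃ t₂ t₃ : ℝ, ∀ θ ∈ I,
        hbar ^ 2 * (deriv (fun θ' => S θ' + ξ₀ / 3) θ) ^ 2
          = 4 * (S θ + ξ₀ / 3) ^ 3 - t₂ * (S θ + ξ₀ / 3) - t₃) := by
  have hpre : IsPreconnected I := hIconn.isPreconnected
  have hS1 : ContDiffOn ℝ 2 (deriv S) I := hS.deriv_of_isOpen hIopen (by norm_num)
  have hS2 : ContDiffOn ℝ 1 (deriv (deriv S)) I := hS1.deriv_of_isOpen hIopen (by norm_num)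
  have d0 : ∀ θ ∈ I, HasDerivAt S (deriv S θ) θ := fun θ h =>
    ((hS.differentiableOn (by norm_num)).differentiableAt (hIopen.mem_nhds h)).hasDerivAt
  have d1 : ∀ θ ∈ I, HasDerivAt (deriv S) (deriv (deriv S) θ) θ := fun θ h =>
    ((hS1.differentiableOn (by norm_num)).differentiableAt (hIopen.mem_nhds h)).hasDerivAt
  have d2 : ∀ θ ∈ I, HasDerivAt (deriv (deriv S)) (iteratedDeriv 3 S θ) θ := fun θ h => by
    have := ((hS2.differentiableOn (by norm_num)).differentiableAt
      (hIopen.mem_nhds h)).hasDerivAt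
    simpa [iteratedDeriv_succ, iteratedDeriv_zero] using this
  have key : ∀ f : ℝ → ℝ, (∀ θ ∈ I, HasDerivAt f 0 θ) → ∃ a, ∀ θ ∈ I, f θ = a := fun f hf =>
    hIopen.exists_is_const_of_deriv_eq_zero hpre
      (fun θ h => (hf θ h).differentiableAt.differentiableWithinAt)
      (fun θ h => (hf θ h).deriv)
  obtain ⟨k, hk⟩ := key
    (fun θ => hbar ^ 2 * deriv (deriv S) θ - 6 * (S θ) ^ 2 - 4 * ξ₀ * S θ) (fun θ h => by
      have := (((d2 θ h).const_mul (hbar ^ 2)).sub (((d0 θ h).pow 2).const_mul 6)).sub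
        ((d0 θ h).const_mul (4 * ξ₀))
      refine this.congr_deriv ?_
      rw [hode θ h]; norm_num; ring)
  obtain ⟨c, hc⟩ := key
    (fun θ => hbar ^ 2 * (deriv S θ) ^ 2 - 4 * (S θ) ^ 3 - 4 * ξ₀ * (S θ) ^ 2 - 2 * k * S θ)
    (fun θ h => by
      have := (((((d1 θ h).pow 2).const_mul (hbar ^ 2)).sub
        (((d0 θ h).pow 3).const_mul 4)).sub (((d0 θ h).pow 2).const_mul (4 * ξ₀))).sub
        ((d0 θ h).const_mul (2 * k))
      refine this.congr_deriv ?_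
      have hk' := hk θ h
      norm_num
      linear_combination 2 * deriv S θ * hk')
  refine ⟨⟨2 * k, c, fun θ h => by linear_combination hc θ h⟩,
    ⟨4 / 3 * ξ₀ ^ 2 - 2 * k, -(8 * ξ₀ ^ 3 / 27 - 2 * k * ξ₀ / 3 + c), fun θ h => ?_⟩⟩
  rw [deriv_add_const]
  linear_combination hc θ h
end

section
/- Let ℏ, β₁, β₂ be real constants, let I ⊆ ℝ be an open interval, and let T : I → ℝ be four times continuously differentiable satisfying, for all z ∈ I, the fourth order equation ℏ²z(1+z²)²T⁽⁴⁾ + 4ℏ²(1+z²)(1+3z²)T⁽³⁾ + [2ℏ²z(13+18z²) − 4β₁z + 4β₂ − 4T − 12z(1+z²)T′]T″ − 8(2+3z²)(T′)² − 8β₁T′ + 4ℏ²(1+6z²)T′ = 0. Then there exists a real constant K₁ such that, for all z ∈ I, ℏ²z²(1+z²)²T⁽³⁾ + 2ℏ²z(1+z²)(1+3z²)T″ − 6z²(1+z²)(T′)² + 2(−ℏ² + ℏ²z² + 3ℏ²z⁴ − 2β₁z² + 2β₂z − 2zT)T′ + 2T² − 4β₂T = K₁. -/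
theorem hasDerivAt_iter_aux {T : ℝ → ℝ} {I : Set ℝ} (hI : IsOpen I)
    (hT : ContDiffOn ℝ 4 T I) (k : ℕ) (hk : k < 4) {z : ℝ} (hz : z ∈ I) :
    HasDerivAt (iteratedDeriv k T) (iteratedDeriv (k + 1) T z) z := by
  have h1 : DifferentiableOn ℝ (iteratedDerivWithin k T I) I :=
    hT.differentiableOn_iteratedDerivWithin (by exact_mod_cast hk) hI.uniqueDiffOn
  have h2 : DifferentiableAt ℝ (iteratedDeriv k T) z := by
    refine ((h1 z hz).differentiableAt (hI.mem_nhds hz)).congr_of_eventuallyEq ?_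
    filter_upwards [hI.mem_nhds hz] with y hy
    exact (iteratedDerivWithin_of_isOpen hI hy).symm
  rw [iteratedDeriv_succ]
  exact h2.hasDerivAt

/-- First integration of the fourth order determining equation (after the
substitution `z = tan θ`) for the angular part of a superintegrable potential
`V(r,θ) = T′(θ)/r²`: on an open interval, every `C⁴` solution of the fourth
order equation makes the displayed third order expression constant. -/
theorem fourth_order_first_integral (hbar β₁ β₂ : ℝ)
    (I : Set ℝ) (hIopen : IsOpen I) (hIconn : I.OrdConnected)
    (T : ℝ → ℝ) (hT : ContDiffOn ℝ 4 T I)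
    (heq : ∀ z ∈ I,
      hbar ^ 2 * z * (1 + z ^ 2) ^ 2 * iteratedDeriv 4 T z
        + 4 * hbar ^ 2 * (1 + z ^ 2) * (1 + 3 * z ^ 2) * iteratedDeriv 3 T z
        + (2 * hbar ^ 2 * z * (13 + 18 * z ^ 2) - 4 * β₁ * z + 4 * β₂
            - 4 * T z - 12 * z * (1 + z ^ 2) * deriv T z) * iteratedDeriv 2 T z
        - 8 * (2 + 3 * z ^ 2) * (deriv T z) ^ 2 - 8 * β₁ * deriv T z
        + 4 * hbar ^ 2 * (1 + 6 * z ^ 2) * deriv T z = 0) :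
    ∃ K₁ : ℝ, ∀ z ∈ I,
      hbar ^ 2 * z ^ 2 * (1 + z ^ 2) ^ 2 * iteratedDeriv 3 T z
        + 2 * hbar ^ 2 * z * (1 + z ^ 2) * (1 + 3 * z ^ 2) * iteratedDeriv 2 T z
        - 6 * z ^ 2 * (1 + z ^ 2) * (deriv T z) ^ 2
        + 2 * (-hbar ^ 2 + hbar ^ 2 * z ^ 2 + 3 * hbar ^ 2 * z ^ 4
            - 2 * β₁ * z ^ 2 + 2 * β₂ * z - 2 * z * T z) * deriv T z
        + 2 * (T z) ^ 2 - 4 * β₂ * T z = K₁ := by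
  have key : ∀ z ∈ I, HasDerivAt (fun z => hbar ^ 2 * z ^ 2 * (1 + z ^ 2) ^ 2 * iteratedDeriv 3 T z
        + 2 * hbar ^ 2 * z * (1 + z ^ 2) * (1 + 3 * z ^ 2) * iteratedDeriv 2 T z
        - 6 * z ^ 2 * (1 + z ^ 2) * (deriv T z) ^ 2
        + 2 * (-hbar ^ 2 + hbar ^ 2 * z ^ 2 + 3 * hbar ^ 2 * z ^ 4
            - 2 * β₁ * z ^ 2 + 2 * β₂ * z - 2 * z * T z) * deriv T z
        + 2 * (T z) ^ 2 - 4 * β₂ * T z) 0 z := by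
    intro z hz
    have d0 := hasDerivAt_iter_aux hIopen hT 0 (by norm_num) hz
    have d1 := hasDerivAt_iter_aux hIopen hT 1 (by norm_num) hz
    have d2 := hasDerivAt_iter_aux hIopen hT 2 (by norm_num) hz
    have d3 := hasDerivAt_iter_aux hIopen hT 3 (by norm_num) hz
    norm_num only [iteratedDeriv_zero, iteratedDeriv_one] at d0 d1 d2 d3
    have hi := hasDerivAt_id' z
    have p2 := hi.pow 2
    have p4 := hi.pow 4
    have q := p2.const_add 1
    have q3 := (p2.const_mul 3).const_add 1
    have e1 := ((p2.const_mul (hbar ^ 2)).mul (q.pow 2)).mul d3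
    have e2 := (((hi.const_mul (2 * hbar ^ 2)).mul q).mul q3).mul d2
    have e3 := ((p2.const_mul 6).mul q).mul (d1.pow 2)
    have e4 := ((((((p2.const_mul (hbar ^ 2)).const_add (-hbar ^ 2)).add
      (p4.const_mul (3 * hbar ^ 2))).sub (p2.const_mul (2 * β₁))).add
      (hi.const_mul (2 * β₂))).sub ((hi.const_mul 2).mul d0)).const_mul 2 |>.mul d1
    have e := ((((e1.add e2).sub e3).add e4).add ((d0.pow 2).const_mul 2)).sub
      (d0.const_mul (4 * β₂))
    refine e.congr_deriv ?_
    simp only [Pi.mul_apply, Pi.add_apply, Pi.sub_apply, Pi.pow_apply]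
    norm_num
    linear_combination z * heq z hz
  rcases I.eq_empty_or_nonempty with rfl | ⟨a, ha⟩
  · exact ⟨0, fun z hz => hz.elim⟩
  · refine ⟨_, fun z hz => hIopen.is_const_of_deriv_eq_zero hIconn.isPreconnected
      (fun y hy => (key y hy).differentiableAt.differentiableWithinAt)
      (fun y hy => (key y hy).deriv) hz ha⟩
end

section
/- Let β₁, β₂, K₁ be real constants and consider the 3×3 symmetric matrix M(z) = [[3z²(1+z²), z, β₁z² − β₂z], [z, −1, β₂], [β₁z² − β₂z, β₂, K₁/2]]. Then det M(z) = 0 for all z ∈ ℝ if and only if β₁ = 0 and K₁ = −2β₂². -/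
/-- The determinant of the coefficient matrix of the first order second degree
equation `3z²(1+z²)T'² + 2zTT' − T² + 2(β₁z² − β₂z)T' + 2β₂T + K₁/2 = 0`
vanishes identically iff `β₁ = 0` and `K₁ = −2β₂²`. -/
theorem det_condition_iff (β₁ β₂ K₁ : ℝ) :
    (∀ z : ℝ,
      (Matrix.det !![3 * z ^ 2 * (1 + z ^ 2), z, β₁ * z ^ 2 - β₂ * z;
                     z, -1, β₂;
                     β₁ * z ^ 2 - β₂ * z, β₂, K₁ / 2]) = 0) ↔
    (β₁ = 0 ∧ K₁ = -2 * β₂ ^ 2) := by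
  have key : ∀ z : ℝ,
      (Matrix.det !![3 * z ^ 2 * (1 + z ^ 2), z, β₁ * z ^ 2 - β₂ * z;
                     z, -1, β₂;
                     β₁ * z ^ 2 - β₂ * z, β₂, K₁ / 2])
        = β₁ ^ 2 * z ^ 4 - (K₁ / 2 + β₂ ^ 2) * (4 * z ^ 2 + 3 * z ^ 4) := by
    intro z
    rw [Matrix.det_fin_three]
    simp
    ring
  simp only [key]
  constructor
  · intro h
    have h1 := h 1
    have h2 := h 2
    have hb : β₁ ^ 2 = 0 := by linarith
    exact ⟨pow_eq_zero_iff (two_ne_zero) |>.mp hb, by linarith⟩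
  · rintro ⟨rfl, rfl⟩ z
    ring
end

section
/- Let α and β₂ be real constants and define T₁ : (0,∞) → ℝ by T₁(z) = β₂ + α·z^{1/3}·(5 + 3z² + 2√(4+3z²))^{1/6}/(2 + √(4+3z²))^{2/3}. Then T₁ is differentiable on (0,∞) and satisfies (z + z√(4+3z²))·T₁′(z) − T₁(z) + β₂ = 0 for all z > 0; consequently T₁ satisfies the classical angular equation 3z²(1+z²)T₁′² + 2zT₁T₁′ − T₁² − 2β₂zT₁′ + 2β₂T₁ − β₂² = 0 on (0,∞). Moreover, every differentiable function T : (0,∞) → ℝ satisfying (z + z√(4+3z²))T′(z) − T(z) + β₂ = 0 for all z > 0 equals T₁ for some real α. -/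
open Real in
/-- The particular solution `T₁` of the linear factor
`(z + z√(4+3z²))T′ − T + β₂ = 0` of the classical angular equation. -/
noncomputable def Tsol₁ (α β₂ z : ℝ) : ℝ :=
  β₂ + α * z ^ ((1 : ℝ) / 3) * (5 + 3 * z ^ 2 + 2 * sqrt (4 + 3 * z ^ 2)) ^ ((1 : ℝ) / 6)
    / (2 + sqrt (4 + 3 * z ^ 2)) ^ ((2 : ℝ) / 3)

/-- The logarithm of the homogeneous solution. -/
noncomputable def Lsol (z : ℝ) : ℝ :=
  Real.log z * ((1 : ℝ) / 3) + Real.log (5 + 3 * z ^ 2 + 2 * Real.sqrt (4 + 3 * z ^ 2)) * ((1 : ℝ) / 6)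
    - Real.log (2 + Real.sqrt (4 + 3 * z ^ 2)) * ((2 : ℝ) / 3)

lemma Tsol_eq (α β₂ z : ℝ) (hz : 0 < z) : Tsol₁ α β₂ z = β₂ + α * Real.exp (Lsol z) := by
  unfold Tsol₁ Lsol
  rw [Real.rpow_def_of_pos hz, Real.rpow_def_of_pos (by positivity),
    Real.rpow_def_of_pos (by positivity), Real.exp_sub, Real.exp_add]
  ring

lemma Lsol_deriv (z : ℝ) (hz : 0 < z) :
    HasDerivAt Lsol (1 / (z * (1 + Real.sqrt (4 + 3 * z ^ 2)))) z := by
  have hp : HasDerivAt (fun z : ℝ => 3 * z ^ 2) (6 * z) z := by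
    refine ((hasDerivAt_pow 2 z).const_mul 3).congr_deriv ?_
    norm_num
    ring
  have hs := (hp.const_add 4).sqrt (by positivity)
  have h1 := (Real.hasDerivAt_log hz.ne').mul_const ((1 : ℝ) / 3)
  have h2 := (((hp.const_add 5).add (hs.const_mul 2)).log (by
    simp only [Pi.add_apply]; positivity)).mul_const ((1 : ℝ) / 6)
  have h3 := ((hs.const_add 2).log (by positivity)).mul_const ((2 : ℝ) / 3)
  have h := (h1.add h2).sub h3
  refine HasDerivAt.congr_deriv (f := Lsol) h ?_
  simp only [Pi.add_apply]
  have hsq : Real.sqrt (4 + 3 * z ^ 2) ^ 2 = 4 + 3 * z ^ 2 := Real.sq_sqrt (by positivity)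
  have hpos : 0 < Real.sqrt (4 + 3 * z ^ 2) := Real.sqrt_pos.2 (by positivity)
  generalize Real.sqrt (4 + 3 * z ^ 2) = s at *
  have e : 5 + 3 * z ^ 2 + 2 * s = (s + 1) ^ 2 := by linarith
  rw [e]
  have a1 : s + 1 ≠ 0 := by positivity
  have a2 : 1 + s ≠ 0 := by positivity
  have a3 : 2 + s ≠ 0 := by positivity
  have e2 : 6 * z + 2 * (6 * z / (2 * s)) = 6 * z * (s + 1) / s := by
    field_simp
  rw [e2]
  have e3 : z⁻¹ * (1 / 3) + 6 * z * (s + 1) / s / (s + 1) ^ 2 * (1 / 6)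
      - 6 * z / (2 * s) / (2 + s) * (2 / 3) - 1 / (z * (1 + s))
      = (s * (s + 1) * (s + 2) + 3 * z ^ 2 * (s + 2) - 6 * z ^ 2 * (s + 1) - 3 * s * (s + 2))
        / (3 * z * s * (s + 1) * (s + 2)) := by
    have a4 : s + 2 ≠ 0 := by positivity
    rw [add_comm 2 s, add_comm 1 s]
    field_simp
  rw [← sub_eq_zero, e3]
  have : s * (s + 1) * (s + 2) + 3 * z ^ 2 * (s + 2) - 6 * z ^ 2 * (s + 1) - 3 * s * (s + 2) = 0 := by
    linear_combination s * hsq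
  rw [this, zero_div]

lemma Tsol_deriv (α β₂ z : ℝ) (hz : 0 < z) :
    HasDerivAt (Tsol₁ α β₂)
      (α * (Real.exp (Lsol z) * (1 / (z * (1 + Real.sqrt (4 + 3 * z ^ 2)))))) z := by
  have h := (((Lsol_deriv z hz).exp).const_mul α).const_add β₂
  refine h.congr_of_eventuallyEq ?_
  filter_upwards [Ioi_mem_nhds hz] with x hx
  exact Tsol_eq α β₂ x hx

open Real in
/-- `T₁` is differentiable on `(0,∞)`, solves the first order linear equation
`(z + z√(4+3z²))T′ − T + β₂ = 0` there (hence also the classical angular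
equation), and every differentiable solution of the linear equation on `(0,∞)`
is of this form. -/
theorem classical_angular_solution_one (α β₂ : ℝ) :
    DifferentiableOn ℝ (Tsol₁ α β₂) (Set.Ioi 0) ∧
    (∀ z ∈ Set.Ioi (0 : ℝ),
      (z + z * sqrt (4 + 3 * z ^ 2)) * deriv (Tsol₁ α β₂) z - Tsol₁ α β₂ z + β₂ = 0) ∧
    (∀ z ∈ Set.Ioi (0 : ℝ),
      3 * z ^ 2 * (1 + z ^ 2) * (deriv (Tsol₁ α β₂) z) ^ 2
        + 2 * z * Tsol₁ α β₂ z * deriv (Tsol₁ α β₂) z - (Tsol₁ α β₂ z) ^ 2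
        - 2 * β₂ * z * deriv (Tsol₁ α β₂) z + 2 * β₂ * Tsol₁ α β₂ z - β₂ ^ 2 = 0) ∧
    (∀ T : ℝ → ℝ, DifferentiableOn ℝ T (Set.Ioi 0) →
      (∀ z ∈ Set.Ioi (0 : ℝ),
        (z + z * sqrt (4 + 3 * z ^ 2)) * deriv T z - T z + β₂ = 0) →
      ∃ α' : ℝ, ∀ z ∈ Set.Ioi (0 : ℝ), T z = Tsol₁ α' β₂ z) := by
  have lin : ∀ z ∈ Set.Ioi (0 : ℝ),
      (z + z * sqrt (4 + 3 * z ^ 2)) * deriv (Tsol₁ α β₂) z - Tsol₁ α β₂ z + β₂ = 0 := by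
    intro z hz
    have hz' : 0 < z := hz
    rw [(Tsol_deriv α β₂ z hz).deriv, Tsol_eq α β₂ z hz]
    have : 1 + sqrt (4 + 3 * z ^ 2) ≠ 0 := by positivity
    field_simp
    ring
  refine ⟨fun z hz => (Tsol_deriv α β₂ z hz).differentiableAt.differentiableWithinAt, lin, ?_, ?_⟩
  · intro z hz
    have h := lin z hz
    have hsq : sqrt (4 + 3 * z ^ 2) ^ 2 = 4 + 3 * z ^ 2 := Real.sq_sqrt (by positivity)
    generalize sqrt (4 + 3 * z ^ 2) = s at *
    generalize deriv (Tsol₁ α β₂) z = D at *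
    have hT : Tsol₁ α β₂ z = β₂ + (z + z * s) * D := by linarith
    rw [hT]
    linear_combination (-z ^ 2 * D ^ 2) * hsq
  · intro T hT hode
    have hder : ∀ z ∈ Set.Ioi (0 : ℝ),
        HasDerivAt (fun z => (T z - β₂) * Real.exp (-Lsol z)) 0 z := by
      intro z hz
      have hz' : 0 < z := hz
      have hTd := ((hT z hz).differentiableAt (Ioi_mem_nhds hz)).hasDerivAt
      have h := (hTd.sub_const β₂).mul (Lsol_deriv z hz).neg.exp
      refine HasDerivAt.congr_deriv h ?_
      have ho := hode z hz
      have hpos : 1 + sqrt (4 + 3 * z ^ 2) ≠ 0 := by positivity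
      have : T z - β₂ = z * (1 + sqrt (4 + 3 * z ^ 2)) * deriv T z := by linarith
      simp only [Pi.neg_apply]
      rw [this]
      field_simp
      ring
    refine ⟨(T 1 - β₂) * Real.exp (-Lsol 1), fun z hz => ?_⟩
    have hc := (convex_Ioi (0 : ℝ)).is_const_of_fderivWithin_eq_zero (𝕜 := ℝ)
      (f := fun z => (T z - β₂) * Real.exp (-Lsol z))
      (fun x hx => (hder x hx).differentiableAt.differentiableWithinAt)
      (fun x hx => by
        rw [fderivWithin_of_isOpen isOpen_Ioi hx, (hder x hx).hasFDerivAt.fderiv]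
        ext; simp) hz (show (1 : ℝ) ∈ Set.Ioi 0 by simp)
    rw [Tsol_eq _ _ _ hz, ← hc, mul_assoc, ← Real.exp_add]
    simp
end

section
/- Let α and β₂ be real constants and define T₂ : (0,∞) → ℝ by T₂(z) = β₂ + α·(1+z²)^{1/3}·(2 + √(4+3z²))^{2/3}/(z·(5 + 3z² + 2√(4+3z²))^{1/6}). Then T₂ is differentiable on (0,∞) and satisfies (z − z√(4+3z²))·T₂′(z) − T₂(z) + β₂ = 0 for all z > 0; consequently T₂ satisfies the classical angular equation 3z²(1+z²)T₂′² + 2zT₂T₂′ − T₂² − 2β₂zT₂′ + 2β₂T₂ − β₂² = 0 on (0,∞). Moreover, every differentiable function T : (0,∞) → ℝ satisfying (z − z√(4+3z²))T′(z) − T(z) + β₂ = 0 for all z > 0 equals T₂ for some real α. -/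
open Real in
/-- The particular solution `T₂` of the linear factor
`(z − z√(4+3z²))T′ − T + β₂ = 0` of the classical angular equation. -/
noncomputable def Tsol₂ (α β₂ z : ℝ) : ℝ :=
  β₂ + α * (1 + z ^ 2) ^ ((1 : ℝ) / 3) * (2 + sqrt (4 + 3 * z ^ 2)) ^ ((2 : ℝ) / 3)
    / (z * (5 + 3 * z ^ 2 + 2 * sqrt (4 + 3 * z ^ 2)) ^ ((1 : ℝ) / 6))

open Real in
/-- Auxiliary exponential form. -/
noncomputable def Gaux (z : ℝ) : ℝ :=
  exp (1 / 3 * log (sqrt (4 + 3 * z ^ 2) - 1) + 2 / 3 * log (2 + sqrt (4 + 3 * z ^ 2))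
    - log z - 1 / 3 * log 3)

lemma s_gt (z : ℝ) (hz : 0 < z) : 2 < Real.sqrt (4 + 3 * z ^ 2) := by
  apply Real.lt_sqrt_of_sq_lt
  nlinarith [pow_pos hz 2]

lemma Tsol_eq_s12 (a b z : ℝ) (hz : 0 < z) : Tsol₂ a b z = b + a * Gaux z := by
  have hs := s_gt z hz
  have hsq : Real.sqrt (4 + 3 * z ^ 2) ^ 2 = 4 + 3 * z ^ 2 := Real.sq_sqrt (by positivity)
  unfold Tsol₂ Gaux
  set s := Real.sqrt (4 + 3 * z ^ 2) with hsdef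
  have h1 : 5 + 3 * z ^ 2 + 2 * s = (1 + s) ^ 2 := by linarith
  have h2 : 1 + z ^ 2 = (s - 1) * (1 + s) / 3 := by linarith
  have e1 : Real.log (5 + 3 * z ^ 2 + 2 * s) = 2 * Real.log (1 + s) := by
    rw [h1, Real.log_pow]; norm_num
  have e2 : Real.log (1 + z ^ 2) = Real.log (s - 1) + Real.log (1 + s) - Real.log 3 := by
    rw [h2, Real.log_div (mul_ne_zero (by linarith) (by linarith)) (by norm_num),
      Real.log_mul (by linarith) (by linarith)]
  rw [Real.rpow_def_of_pos (by positivity : 0 < 1 + z ^ 2),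
    Real.rpow_def_of_pos (by linarith : 0 < 2 + s),
    Real.rpow_def_of_pos (by positivity : 0 < 5 + 3 * z ^ 2 + 2 * s), e1, e2]
  have e3 : ∀ x y : ℝ, x / (z * y) = x / (Real.exp (Real.log z) * y) := by
    intro x y
    rw [Real.exp_log hz]
  rw [e3, mul_assoc, mul_div_assoc, ← Real.exp_add, ← Real.exp_add, ← Real.exp_sub]
  congr 3
  ring

lemma Gaux_deriv (z : ℝ) (hz : 0 < z) :
    HasDerivAt Gaux (Gaux z / (z - z * Real.sqrt (4 + 3 * z ^ 2))) z := by
  have hs := s_gt z hz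
  have hsq : Real.sqrt (4 + 3 * z ^ 2) ^ 2 = 4 + 3 * z ^ 2 := Real.sq_sqrt (by positivity)
  have hp : HasDerivAt (fun z : ℝ => 4 + 3 * z ^ 2) (6 * z) z := by
    have := ((hasDerivAt_pow 2 z).const_mul 3).const_add 4
    refine this.congr_deriv ?_
    norm_num
    ring
  have hS := hp.sqrt (by positivity)
  have h := ((((((hS.sub_const 1).log (by linarith)).const_mul (1 / 3)).add
    (((hS.const_add 2).log (by linarith)).const_mul (2 / 3))).sub
    (Real.hasDerivAt_log hz.ne')).sub_const (1 / 3 * Real.log 3)).exp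
  refine HasDerivAt.congr_deriv (f := Gaux) h ?_
  simp only [Gaux, Pi.add_apply, Pi.sub_apply]
  rw [div_eq_mul_inv]
  congr 1
  set s := Real.sqrt (4 + 3 * z ^ 2) with hsdef
  have a1 : s - 1 ≠ 0 := by linarith
  have a2 : 2 + s ≠ 0 := by linarith
  have a3 : s ≠ 0 := by linarith
  have a4 : z ≠ 0 := hz.ne'
  have a5 : 1 - s ≠ 0 := by linarith
  have h3 : z - z * s = -(z * (s - 1)) := by ring
  rw [h3]
  field_simp
  linear_combination (-6 * s) * hsq

lemma Gaux_pos (z : ℝ) : 0 < Gaux z := Real.exp_pos _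

lemma Tsol_deriv_s12 (a b z : ℝ) (hz : 0 < z) :
    HasDerivAt (Tsol₂ a b) (a * (Gaux z / (z - z * Real.sqrt (4 + 3 * z ^ 2)))) z := by
  refine (((Gaux_deriv z hz).const_mul a).const_add b).congr_of_eventuallyEq ?_
  filter_upwards [lt_mem_nhds hz] with y hy using Tsol_eq_s12 a b y hy


open Real in
/-- `T₂` is differentiable on `(0,∞)`, solves the first order linear equation
`(z − z√(4+3z²))T′ − T + β₂ = 0` there (hence also the classical angular
equation), and every differentiable solution of the linear equation on `(0,∞)`
is of this form. -/
theorem classical_angular_solution_two (α β₂ : ℝ) :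
    DifferentiableOn ℝ (Tsol₂ α β₂) (Set.Ioi 0) ∧
    (∀ z ∈ Set.Ioi (0 : ℝ),
      (z - z * sqrt (4 + 3 * z ^ 2)) * deriv (Tsol₂ α β₂) z - Tsol₂ α β₂ z + β₂ = 0) ∧
    (∀ z ∈ Set.Ioi (0 : ℝ),
      3 * z ^ 2 * (1 + z ^ 2) * (deriv (Tsol₂ α β₂) z) ^ 2
        + 2 * z * Tsol₂ α β₂ z * deriv (Tsol₂ α β₂) z - (Tsol₂ α β₂ z) ^ 2
        - 2 * β₂ * z * deriv (Tsol₂ α β₂) z + 2 * β₂ * Tsol₂ α β₂ z - β₂ ^ 2 = 0) ∧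
    (∀ T : ℝ → ℝ, DifferentiableOn ℝ T (Set.Ioi 0) →
      (∀ z ∈ Set.Ioi (0 : ℝ),
        (z - z * sqrt (4 + 3 * z ^ 2)) * deriv T z - T z + β₂ = 0) →
      ∃ α' : ℝ, ∀ z ∈ Set.Ioi (0 : ℝ), T z = Tsol₂ α' β₂ z) := by


  have hne : ∀ z : ℝ, 0 < z → z - z * sqrt (4 + 3 * z ^ 2) ≠ 0 := by
    intro z hz
    have := s_gt z hz
    have : z - z * sqrt (4 + 3 * z ^ 2) = -(z * (sqrt (4 + 3 * z ^ 2) - 1)) := by ring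
    rw [this]
    exact neg_ne_zero.2 (mul_ne_zero hz.ne' (by linarith))
  have hlin : ∀ z ∈ Set.Ioi (0 : ℝ),
      (z - z * sqrt (4 + 3 * z ^ 2)) * deriv (Tsol₂ α β₂) z - Tsol₂ α β₂ z + β₂ = 0 := by
    intro z hz
    have h0 := hne z hz
    rw [(Tsol_deriv_s12 α β₂ z hz).deriv, Tsol_eq_s12 α β₂ z hz]
    generalize z - z * sqrt (4 + 3 * z ^ 2) = d at h0 ⊢
    field_simp
    ring
  refine ⟨fun z hz => (Tsol_deriv_s12 α β₂ z hz).differentiableAt.differentiableWithinAt, hlin, ?_, ?_⟩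
  · intro z hz
    have h := hlin z hz
    have hsq : sqrt (4 + 3 * z ^ 2) ^ 2 = 4 + 3 * z ^ 2 := Real.sq_sqrt (by positivity)
    generalize sqrt (4 + 3 * z ^ 2) = s at h hsq
    generalize deriv (Tsol₂ α β₂) z = p at h ⊢
    have hT : Tsol₂ α β₂ z = (z - z * s) * p + β₂ := by linarith
    rw [hT]
    linear_combination (-(z ^ 2 * p ^ 2)) * hsq
  · intro T hT hode
    have hd : ∀ z ∈ Set.Ioi (0 : ℝ), HasDerivAt (fun y => (T y - β₂) / Gaux y) 0 z := by
      intro z hz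
      have h0 := hne z hz
      have h1 := (hT.differentiableAt (Ioi_mem_nhds hz)).hasDerivAt
      refine ((h1.sub_const β₂).fun_div (Gaux_deriv z hz) (Gaux_pos z).ne').congr_deriv ?_
      have h2 : T z - β₂ = (z - z * sqrt (4 + 3 * z ^ 2)) * deriv T z := by
        linarith [hode z hz]
      rw [h2]
      generalize z - z * sqrt (4 + 3 * z ^ 2) = d at h0 ⊢
      have := (Gaux_pos z).ne'
      field_simp
      ring
    refine ⟨(T 1 - β₂) / Gaux 1, fun z hz => ?_⟩
    have hc : (T z - β₂) / Gaux z = (T 1 - β₂) / Gaux 1 :=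
      isOpen_Ioi.is_const_of_deriv_eq_zero (f := fun y => (T y - β₂) / Gaux y)
        isPreconnected_Ioi
        (fun y hy => (hd y hy).differentiableAt.differentiableWithinAt)
        (fun y hy => (hd y hy).deriv) hz (Set.mem_Ioi.2 one_pos)
    rw [Tsol_eq_s12 _ _ z hz, ← hc]
    have := (Gaux_pos z).ne'
    field_simp
    ring
end

section
/- Let α be a real constant and let U = {(x,y) ∈ ℝ² : y ≠ 0 and 3x² − y² ≠ 0}. Define on U × ℝ² the Hamiltonian H(x,y,p₁,p₂) = (p₁² + p₂²)/2 + α(x² + y²)²/(y²(3x² − y²)²) and the cubic function Y(x,y,p₁,p₂) = p₁³ − 3p₁p₂² + 2α·((−3x⁴ + 6x²y² + y⁴)/(y²(y² − 3x²)²))·p₁ + α·(16xy/(y² − 3x²)²)·p₂. Then the Poisson bracket {H,Y} := (∂H/∂p₁)(∂Y/∂x) + (∂H/∂p₂)(∂Y/∂y) − (∂H/∂x)(∂Y/∂p₁) − (∂H/∂y)(∂Y/∂p₂) vanishes identically on U × ℝ². -/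
/-- The classical Hamiltonian of the two-dimensional rational three-body
Calogero system (with no central term), in cartesian coordinates. -/
noncomputable def calogeroH (α x y p₁ p₂ : ℝ) : ℝ :=
  (p₁ ^ 2 + p₂ ^ 2) / 2 + α * (x ^ 2 + y ^ 2) ^ 2 / (y ^ 2 * (3 * x ^ 2 - y ^ 2) ^ 2)

/-- The third order integral of motion of the Calogero system. -/
noncomputable def calogeroY (α x y p₁ p₂ : ℝ) : ℝ :=
  p₁ ^ 3 - 3 * p₁ * p₂ ^ 2
    + 2 * α * ((-3 * x ^ 4 + 6 * x ^ 2 * y ^ 2 + y ^ 4) /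
        (y ^ 2 * (y ^ 2 - 3 * x ^ 2) ^ 2)) * p₁
    + α * (16 * x * y / (y ^ 2 - 3 * x ^ 2) ^ 2) * p₂

/-- The Poisson bracket `{H,Y}` vanishes identically on the domain
`y ≠ 0`, `3x² − y² ≠ 0`: the cubic function `Y` is a third order integral of
motion of the Calogero Hamiltonian `H`. -/
theorem calogero_poisson_bracket_vanishes (α : ℝ) (x y p₁ p₂ : ℝ)
    (hy : y ≠ 0) (hxy : 3 * x ^ 2 - y ^ 2 ≠ 0) :
    deriv (fun t => calogeroH α x y t p₂) p₁ * deriv (fun t => calogeroY α t y p₁ p₂) x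
      + deriv (fun t => calogeroH α x y p₁ t) p₂ * deriv (fun t => calogeroY α x t p₁ p₂) y
      - deriv (fun t => calogeroH α t y p₁ p₂) x * deriv (fun t => calogeroY α x y t p₂) p₁
      - deriv (fun t => calogeroH α x t p₁ p₂) y * deriv (fun t => calogeroY α x y p₁ t) p₂
      = 0 := by
  have hxy' : y ^ 2 - 3 * x ^ 2 ≠ 0 := fun h => hxy (by linarith)
  have hD1 : y ^ 2 * (3 * x ^ 2 - y ^ 2) ^ 2 ≠ 0 := by positivity
  have hD2 : y ^ 2 * (y ^ 2 - 3 * x ^ 2) ^ 2 ≠ 0 := by positivity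
  have hD3 : (y ^ 2 - 3 * x ^ 2) ^ 2 ≠ 0 := by positivity
  have pw : ∀ (n : ℕ) (a : ℝ), HasDerivAt (fun t : ℝ => t ^ n) (n * a ^ (n - 1)) a :=
    fun n a => hasDerivAt_pow n a
  have h1 := (((pw 2 p₁).add_const (p₂ ^ 2)).div_const 2).add_const
    (α * (x ^ 2 + y ^ 2) ^ 2 / (y ^ 2 * (3 * x ^ 2 - y ^ 2) ^ 2))
  have h2 := (((pw 2 p₂).const_add (p₁ ^ 2)).div_const 2).add_const
    (α * (x ^ 2 + y ^ 2) ^ 2 / (y ^ 2 * (3 * x ^ 2 - y ^ 2) ^ 2))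
  have h3 := (((((pw 2 x).add_const (y ^ 2)).fun_pow 2).const_mul α).fun_div
    (((((pw 2 x).const_mul 3).sub_const (y ^ 2)).fun_pow 2).const_mul (y ^ 2)) hD1).const_add
    ((p₁ ^ 2 + p₂ ^ 2) / 2)
  have h4 := (((((pw 2 y).const_add (x ^ 2)).fun_pow 2).const_mul α).fun_div
    ((pw 2 y).fun_mul (((pw 2 y).const_sub (3 * x ^ 2)).fun_pow 2)) hD1).const_add
    ((p₁ ^ 2 + p₂ ^ 2) / 2)
  have k1 := (((pw 3 p₁).fun_sub (((hasDerivAt_id' p₁).const_mul 3).mul_const (p₂ ^ 2))).fun_add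
    ((hasDerivAt_id' p₁).const_mul (2 * α * ((-3 * x ^ 4 + 6 * x ^ 2 * y ^ 2 + y ^ 4) /
        (y ^ 2 * (y ^ 2 - 3 * x ^ 2) ^ 2))))).add_const
    (α * (16 * x * y / (y ^ 2 - 3 * x ^ 2) ^ 2) * p₂)
  have k2 := ((((pw 2 p₂).const_mul (3 * p₁)).const_sub (p₁ ^ 3)).add_const
    (2 * α * ((-3 * x ^ 4 + 6 * x ^ 2 * y ^ 2 + y ^ 4) /
        (y ^ 2 * (y ^ 2 - 3 * x ^ 2) ^ 2)) * p₁)).fun_add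
    ((hasDerivAt_id' p₂).const_mul (α * (16 * x * y / (y ^ 2 - 3 * x ^ 2) ^ 2)))
  have k3 := ((((((((pw 4 x).const_mul (-3)).fun_add
    (((pw 2 x).const_mul 6).mul_const (y ^ 2))).add_const (y ^ 4)).fun_div
    (((((pw 2 x).const_mul 3).const_sub (y ^ 2)).fun_pow 2).const_mul (y ^ 2)) hD2).const_mul
    (2 * α)).mul_const p₁).const_add (p₁ ^ 3 - 3 * p₁ * p₂ ^ 2)).fun_add
    ((((((hasDerivAt_id' x).const_mul 16).mul_const y).fun_div
    ((((pw 2 x).const_mul 3).const_sub (y ^ 2)).fun_pow 2) hD3).const_mul α).mul_const p₂)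
  have k4 := ((((((((pw 2 y).const_mul (6 * x ^ 2)).const_add (-3 * x ^ 4)).fun_add
    (pw 4 y)).fun_div
    ((pw 2 y).fun_mul (((pw 2 y).sub_const (3 * x ^ 2)).fun_pow 2)) hD2).const_mul
    (2 * α)).mul_const p₁).const_add (p₁ ^ 3 - 3 * p₁ * p₂ ^ 2)).fun_add
    (((((hasDerivAt_id' y).const_mul (16 * x)).fun_div
    (((pw 2 y).sub_const (3 * x ^ 2)).fun_pow 2) hD3).const_mul α).mul_const p₂)
  unfold calogeroH calogeroY
  rw [h1.deriv, h2.deriv, h3.deriv, h4.deriv, k1.deriv, k2.deriv, k3.deriv, k4.deriv]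
  have e : 3 * x ^ 2 - y ^ 2 = -(y ^ 2 - 3 * x ^ 2) := by ring
  rw [e]
  generalize hd : y ^ 2 - 3 * x ^ 2 = d at *
  norm_num
  field_simp
  subst hd
  ring
end
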